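/- arXiv:1312.0034 — 2 statements merged into one kernel-verified Lean document; each statement's English description precedes it below -/
import Mathlib

section
/- Let s ≥ 1 be an odd integer, let γ be a real number with |π|^{1/(q^s+q^{s-1})} < γ < |π|^{1/(q^{s+2}+q^{s+1})}, and let u_0 ∈ ℂ_p with |u_0| = γ. Then the map u ↦ φ_1(u)/φ_0(u) is a bijection from the open disk {u ∈ ℂ_p : |u − u_0| < (|π|·γ^{-2})^{1/(q-1)}} onto the open disk {w ∈ ℂ_p : |w − φ_1(u_0)/φ_0(u_0)| < |π|^{s+1+1/(q-1)}·γ^{-2q^{s+1}/(q-1)}}. -/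
open Filter


/-- The coefficients `m_k(u)` of the quasi-logarithm of the Gross-Hopkins
universal deformation: `m_0 = 1`, `m_1(u) = u/π`, and
`m_k(u) = (u/π)·m_{k-1}(u^q) + (1/π)·m_{k-2}(u^{q²})`. -/
noncomputable def ghm {C : Type*} [Field C] (π : C) (q : ℕ) : ℕ → C → C
  | 0, _ => 1
  | 1, u => u / π
  | (k+2), u => (u / π) * ghm π q (k+1) (u ^ q) + (1 / π) * ghm π q k (u ^ (q^2))

/-- First coordinate of the Gross-Hopkins period map:
`φ₀(u) = lim_k π^k · m_{2k}(u)`. -/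
noncomputable def ghphi0 {C : Type*} [NormedField C] (π : C) (q : ℕ) (u : C) : C :=
  limUnder atTop (fun k => π ^ k * ghm π q (2*k) u)

/-- Second coordinate of the Gross-Hopkins period map:
`φ₁(u) = lim_{k≥1} π^k · m_{2k-1}(u)`. -/
noncomputable def ghphi1 {C : Type*} [NormedField C] (π : C) (q : ℕ) (u : C) : C :=
  limUnder atTop (fun k => π ^ (k+1) * ghm π q (2*k+1) u)

namespace GrossHopkins

section Ultrametric

variable {C : Type*} [NormedField C] [IsUltrametricDist C]

lemma norm_add_le_of_le {x y : C} {c : ℝ} (hx : ‖x‖ ≤ c) (hy : ‖y‖ ≤ c) : ‖x + y‖ ≤ c :=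
  (IsUltrametricDist.norm_add_le_max x y).trans (max_le hx hy)

lemma norm_sub_le_of_le {x y : C} {c : ℝ} (hx : ‖x‖ ≤ c) (hy : ‖y‖ ≤ c) : ‖x - y‖ ≤ c := by
  rw [sub_eq_add_neg]
  exact norm_add_le_of_le hx (by rwa [norm_neg])

lemma norm_eq_of_norm_sub_le {x y : C} {θ : ℝ} (hθ : θ < 1) (hy : y ≠ 0)
    (h : ‖x - y‖ ≤ θ * ‖y‖) : ‖x‖ = ‖y‖ := by
  have hy' := norm_pos_iff.2 hy
  have hlt : ‖x - y‖ < ‖y‖ := by nlinarith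
  have := IsUltrametricDist.norm_add_eq_max_of_norm_ne_norm hlt.ne
  rw [sub_add_cancel] at this
  rw [this, max_eq_right hlt.le]

/-- Raising to a power of `p` brings two points closer together. -/
lemma norm_pow_sub_pow_le {p r : ℕ} (hp : p.Prime) (u v : C) {c γ : ℝ}
    (hpc : ‖(p : C)‖ ≤ c) (hu : ‖u‖ ≤ γ) (hv : ‖v‖ ≤ γ) :
    ‖u ^ p ^ r - v ^ p ^ r‖ ≤ max (‖u - v‖ ^ p ^ r) (c * γ ^ (p ^ r - 1) * ‖u - v‖) := by
  have hγ : 0 ≤ γ := (norm_nonneg u).trans hu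
  have hc : 0 ≤ c := (norm_nonneg _).trans hpc
  have hδ : ‖u - v‖ ≤ γ := norm_sub_le_of_le hu hv
  obtain ⟨h, rfl⟩ : ∃ h, u = v + h := ⟨u - v, by ring⟩
  rw [add_sub_cancel_left] at *
  rw [add_pow_prime_pow_eq hp, mul_assoc (p : C), mul_assoc (p : C), Finset.mul_sum,
    add_assoc, add_sub_cancel_left]
  refine (IsUltrametricDist.norm_add_le_max _ _).trans (max_le_max (norm_pow _ _).le ?_)
  rw [norm_mul, mul_assoc]
  refine mul_le_mul hpc ?_ (norm_nonneg _) hc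
  refine IsUltrametricDist.norm_sum_le_of_forall_le_of_nonneg (by positivity) fun k hk => ?_
  rw [Finset.mem_Ioo] at hk
  have hn := IsUltrametricDist.norm_natCast_le_one C ((p ^ r).choose k / p)
  have e : γ ^ (p ^ r - 1) = γ * (γ ^ (k - 1) * γ ^ (p ^ r - k - 1)) := by
    rw [← pow_add, ← pow_succ']; congr 1; omega
  calc ‖v * h * (v ^ (k - 1) * h ^ (p ^ r - k - 1) * ((p ^ r).choose k / p : ℕ))‖
      = ‖v‖ * (‖v‖ ^ (k - 1) * ‖h‖ ^ (p ^ r - k - 1)) * ‖h‖ * ‖(((p ^ r).choose k / p : ℕ) : C)‖ := by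
        simp only [norm_mul, norm_pow]; ring
    _ ≤ γ * (γ ^ (k - 1) * γ ^ (p ^ r - k - 1)) * ‖h‖ * 1 := by gcongr
    _ = _ := by rw [e, mul_one]

/-- A map whose scaled increments are uniformly close to the identity on every smaller closed ball
is a bijection between the corresponding open balls. -/
lemma bijOn_ball_of_approx_linear [CompleteSpace C] {f : C → C} {u₀ l : C} (hl : l ≠ 0) {r : ℝ}
    (hf : ∀ ρ < r, ∃ θ < 1, ∀ u v, ‖u - u₀‖ ≤ ρ → ‖v - u₀‖ ≤ ρ →
      ‖l * (f u - f v) - (u - v)‖ ≤ θ * ‖u - v‖) :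
    Set.BijOn f {u | ‖u - u₀‖ < r} {w | ‖w - f u₀‖ < r / ‖l‖} := by
  have hl' := norm_pos_iff.2 hl
  have key : ∀ u v, ‖u - u₀‖ < r → ‖v - u₀‖ < r → ‖l * (f u - f v)‖ = ‖u - v‖ := by
    intro u v hu hv
    obtain ⟨θ, hθ, h⟩ := hf _ (max_lt hu hv)
    rcases eq_or_ne u v with rfl | huv
    · simp
    · exact norm_eq_of_norm_sub_le hθ (sub_ne_zero.2 huv) (h u v (le_max_left _ _) (le_max_right _ _))
  refine ⟨fun u hu => ?_, fun u hu v hv huv => ?_, fun w hw => ?_⟩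
  · have hr : ‖u₀ - u₀‖ < r := by
      rw [sub_self, norm_zero]; exact (norm_nonneg _).trans_lt hu
    have := key u u₀ hu hr
    rw [norm_mul] at this
    rw [Set.mem_ofPred_eq, lt_div_iff₀ hl', mul_comm, this]
    exact hu
  · have := key u v hu hv
    rw [huv, sub_self, mul_zero, norm_zero] at this
    exact sub_eq_zero.1 (norm_eq_zero.1 this.symm)
  · rw [Set.mem_ofPred_eq, lt_div_iff₀ hl', mul_comm, ← norm_mul] at hw
    set ρ := ‖l * (w - f u₀)‖ with hρ
    obtain ⟨θ, hθ, h⟩ := hf ρ hw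
    have hρ0 : 0 ≤ ρ := norm_nonneg _
    let T : C → C := fun u => u - l * (f u - w)
    have hmaps : Set.MapsTo T (Metric.closedBall u₀ ρ) (Metric.closedBall u₀ ρ) := by
      intro u hu
      rw [mem_closedBall_iff_norm] at hu ⊢
      have e : T u - u₀ = l * (w - f u₀) - (l * (f u - f u₀) - (u - u₀)) := by
        simp only [T]; ring
      rw [e]
      refine norm_sub_le_of_le le_rfl ((h u u₀ hu (by simpa using hρ0)).trans ?_)
      nlinarith [norm_nonneg (u - u₀)]
    have hcon : ContractingWith θ.toNNReal (hmaps.restrict T _ _) := by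
      refine ⟨by rw [← Real.toNNReal_one]; exact (Real.toNNReal_lt_toNNReal_iff one_pos).2 hθ, ?_⟩
      refine LipschitzWith.of_dist_le_mul fun x y => ?_
      rw [Subtype.dist_eq, Subtype.dist_eq, dist_eq_norm, dist_eq_norm]
      have e : (hmaps.restrict T _ _ x : C) - (hmaps.restrict T _ _ y : C)
          = -(l * (f x - f y) - (x - y)) := by
        simp only [Set.MapsTo.val_restrict_apply, T]; ring
      rw [e, norm_neg]
      refine (h x y (mem_closedBall_iff_norm.1 x.2) (mem_closedBall_iff_norm.1 y.2)).trans ?_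
      gcongr
      exact Real.le_coe_toNNReal θ
    obtain ⟨y, hy, hfix, -⟩ := hcon.exists_fixedPoint' Metric.isClosed_closedBall.isComplete
      hmaps (Metric.mem_closedBall_self hρ0) (edist_ne_top _ _)
    refine ⟨y, (mem_closedBall_iff_norm.1 hy).trans_lt hw, ?_⟩
    have : l * (f y - w) = 0 := by
      have : y - l * (f y - w) = y := hfix
      linear_combination -this
    exact sub_eq_zero.1 ((mul_eq_zero.1 this).resolve_left hl)

end Ultrametric

section Truncation

/-- The truncations `(A N, B N)` of `(φ₀, φ₁)`; the two coordinates of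
`F (N + 2) u = u • J (F (N + 1) (u ^ q)) + F N (u ^ q ^ 2)` with `J (a, b) = (b / π, a)`. -/
noncomputable def trunc {C : Type*} [Field C] (π : C) (q : ℕ) : ℕ → C → C × C
  | 0, _ => (1, 0)
  | 1, u => (1, u)
  | (N + 2), u => (u / π * (trunc π q (N + 1) (u ^ q)).2 + (trunc π q N ((u ^ q) ^ q)).1,
      u * (trunc π q (N + 1) (u ^ q)).1 + (trunc π q N ((u ^ q) ^ q)).2)

variable {C : Type*}

lemma trunc_fst_add_two [Field C] (π : C) (q N : ℕ) (u : C) :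
    (trunc π q (N + 2) u).1 =
      u / π * (trunc π q (N + 1) (u ^ q)).2 + (trunc π q N ((u ^ q) ^ q)).1 := by
  rw [trunc]

lemma trunc_snd_add_two [Field C] (π : C) (q N : ℕ) (u : C) :
    (trunc π q (N + 2) u).2 =
      u * (trunc π q (N + 1) (u ^ q)).1 + (trunc π q N ((u ^ q) ^ q)).2 := by
  rw [trunc]

lemma ghm_add_two [Field C] (π : C) (q k : ℕ) (u : C) :
    ghm π q (k + 2) u = u / π * ghm π q (k + 1) (u ^ q) + 1 / π * ghm π q k ((u ^ q) ^ q) := by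
  rw [ghm, ← pow_mul, ← sq]

lemma trunc_eq_ghm [Field C] {π : C} (hπ : π ≠ 0) (q k : ℕ) :
    ∀ u : C, (trunc π q (2 * k) u).1 = π ^ k * ghm π q (2 * k) u ∧
      (trunc π q (2 * k + 1) u).1 = π ^ k * ghm π q (2 * k) u ∧
      (trunc π q (2 * k + 1) u).2 = π ^ (k + 1) * ghm π q (2 * k + 1) u ∧
      (trunc π q (2 * k + 2) u).2 = π ^ (k + 1) * ghm π q (2 * k + 1) u := by
  induction k with
  | zero =>
    intro u
    have : π * (u / π) = u := mul_div_cancel₀ u hπ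
    simp [trunc, ghm, this]
  | succ k ih =>
    have h1 : ∀ u, (trunc π q (2 * k + 2) u).1 = π ^ (k + 1) * ghm π q (2 * k + 2) u := by
      intro u
      rw [trunc_fst_add_two, (ih _).2.2.1, (ih _).1, ghm_add_two]
      field_simp
      ring
    have h2 : ∀ u, (trunc π q (2 * k + 3) u).1 = π ^ (k + 1) * ghm π q (2 * k + 2) u := by
      intro u
      rw [trunc_fst_add_two, (ih _).2.2.2, (ih _).2.1, ghm_add_two]
      field_simp
      ring
    intro u
    refine ⟨h1 u, h2 u, ?_, ?_⟩
    · rw [show 2 * (k + 1) + 1 = (2 * k + 1) + 2 by ring, trunc_snd_add_two, h1, (ih _).2.2.1,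
        ghm_add_two π q (2 * k + 1) u]
      field_simp
      ring
    · rw [show 2 * (k + 1) + 2 = (2 * k + 2) + 2 by ring, trunc_snd_add_two, h2, (ih _).2.2.2,
        show 2 * (k + 1) + 1 = (2 * k + 1) + 2 by ring, ghm_add_two π q (2 * k + 1) u]
      field_simp
      ring

lemma norm_pow_le_sq [NormedField C] {q : ℕ} (hq : 2 ≤ q) {u : C} (hu : ‖u‖ ≤ 1) : ‖u ^ q‖ ≤ ‖u‖ ^ 2 := by
  rw [norm_pow]; exact pow_le_pow_of_le_one (norm_nonneg _) hu hq

lemma norm_pow_le_self [NormedField C] {q : ℕ} (hq : 2 ≤ q) {u : C} (hu : ‖u‖ ≤ 1) : ‖u ^ q‖ ≤ ‖u‖ := by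
  rw [norm_pow]; exact pow_le_of_le_one (norm_nonneg _) hu (by omega)

variable [NormedField C] [IsUltrametricDist C]

lemma norm_trunc_succ_sub_le {π : C} (hπ0 : 0 < ‖π‖) (hπ1 : ‖π‖ < 1) {q : ℕ} (hq : 2 ≤ q) (N : ℕ) :
    ∀ u : C, ‖u‖ ≤ ‖π‖ ^ 2 →
      (‖π‖ * ‖(trunc π q (N + 1) u).1 - (trunc π q N u).1‖ ≤ ‖π‖ ^ N * ‖u‖ ∧
        ‖π‖ * ‖(trunc π q (N + 1) u).2 - (trunc π q N u).2‖ ≤ ‖π‖ ^ N * ‖u‖) := by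
  induction N using Nat.twoStepInduction with
  | zero =>
    intro u hu
    simp only [trunc, sub_self, norm_zero, mul_zero, pow_zero, one_mul, sub_zero]
    exact ⟨norm_nonneg _, mul_le_of_le_one_left (norm_nonneg _) hπ1.le⟩
  | one =>
    intro u hu
    have hu1 : ‖u‖ ≤ 1 := hu.trans (pow_le_one₀ hπ0.le hπ1.le)
    simp only [trunc, add_sub_cancel_right, mul_one, add_zero, sub_self, norm_zero, mul_zero,
      pow_one]
    refine ⟨?_, by positivity⟩
    have := norm_pow_le_self hq hu1
    rw [norm_mul, norm_div, ← mul_assoc, mul_div_cancel₀ _ hπ0.ne', mul_comm]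
    gcongr
    nlinarith
  | more N ih1 ih2 =>
    intro u hu
    have hu1 : ‖u‖ ≤ 1 := hu.trans (pow_le_one₀ hπ0.le hπ1.le)
    have ha : ‖u ^ q‖ ≤ ‖u‖ ^ 2 := norm_pow_le_sq hq hu1
    have ha' : ‖u ^ q‖ ≤ ‖π‖ ^ 2 := (norm_pow_le_self hq hu1).trans hu
    have ha1 : ‖u ^ q‖ ≤ 1 := (norm_pow_le_self hq hu1).trans hu1
    have hb : ‖(u ^ q) ^ q‖ ≤ ‖u ^ q‖ := norm_pow_le_self hq ha1
    have hb' : ‖(u ^ q) ^ q‖ ≤ ‖π‖ ^ 2 := hb.trans ha'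
    have hb2 : ‖(u ^ q) ^ q‖ ≤ ‖π‖ ^ 2 * ‖u‖ := by nlinarith [norm_nonneg u]
    have hN : 0 < ‖π‖ ^ N := by positivity
    have hsnd : ∀ x : C, ‖π‖ * ‖x‖ ≤ ‖π‖ ^ N * ‖(u ^ q) ^ q‖ →
        ‖x‖ ≤ ‖π‖ ^ (N + 2) * ‖u‖ / ‖π‖ := by
      intro x hx
      rw [le_div_iff₀ hπ0, pow_add]
      nlinarith
    have hfst : ∀ x : C, ‖π‖ * ‖x‖ ≤ ‖π‖ ^ (N + 1) * ‖u ^ q‖ →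
        ‖u‖ * ‖x‖ ≤ ‖π‖ ^ (N + 2) * ‖u‖ := by
      intro x hx
      have : ‖x‖ ≤ ‖π‖ ^ N * ‖u ^ q‖ := by
        rw [pow_succ] at hx; exact le_of_mul_le_mul_left (by linarith) hπ0
      rw [pow_add, mul_comm]
      gcongr
      exact this.trans (by gcongr)
    have fac : ∀ x : C, ‖x‖ ≤ ‖π‖ ^ (N + 2) * ‖u‖ / ‖π‖ → ‖π‖ * ‖x‖ ≤ ‖π‖ ^ (N + 2) * ‖u‖ := by
      intro x hx; rw [le_div_iff₀ hπ0] at hx; linarith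
    constructor
    · apply fac
      rw [show N + 2 + 1 = (N + 1) + 2 by ring, trunc_fst_add_two, trunc_fst_add_two,
        add_sub_add_comm, ← mul_sub]
      refine norm_add_le_of_le ?_ (hsnd _ (ih1 _ hb').1)
      rw [norm_mul, norm_div, div_mul_eq_mul_div]
      exact div_le_div_of_nonneg_right (hfst _ (ih2 _ ha').2) hπ0.le
    · apply fac
      rw [show N + 2 + 1 = (N + 1) + 2 by ring, trunc_snd_add_two, trunc_snd_add_two,
        add_sub_add_comm, ← mul_sub]
      refine norm_add_le_of_le ?_ (hsnd _ (ih1 _ hb').2)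
      rw [norm_mul]
      refine (hfst _ (ih2 _ ha').1).trans ?_
      exact le_div_self (by positivity) hπ0 hπ1.le

lemma exists_tendsto_trunc_of_small [CompleteSpace C] {π : C} (hπ0 : 0 < ‖π‖) (hπ1 : ‖π‖ < 1)
    {q : ℕ} (hq : 2 ≤ q) {u : C} (hu : ‖u‖ ≤ ‖π‖ ^ 2) :
    ∃ l, Tendsto (fun N => trunc π q N u) atTop (nhds l) := by
  refine cauchySeq_tendsto_of_complete (cauchySeq_of_le_geometric ‖π‖ (‖u‖ / ‖π‖) hπ1 fun N => ?_)
  have h := norm_trunc_succ_sub_le hπ0 hπ1 hq N u hu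
  rw [dist_comm, Prod.dist_eq, dist_eq_norm, dist_eq_norm, div_mul_eq_mul_div]
  refine max_le ?_ ?_ <;> rw [le_div_iff₀ hπ0] <;> linarith [h.1, h.2]

lemma exists_tendsto_trunc [CompleteSpace C] {π : C} (hπ0 : 0 < ‖π‖) (hπ1 : ‖π‖ < 1)
    {q : ℕ} (hq : 2 ≤ q) {u : C} (hu : ‖u‖ < 1) :
    ∃ l, Tendsto (fun N => trunc π q N u) atTop (nhds l) := by
  obtain ⟨n, hn⟩ : ∃ n, ‖u‖ ^ q ^ n ≤ ‖π‖ ^ 2 := by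
    obtain ⟨n, hn⟩ := exists_pow_lt_of_lt_one (pow_pos hπ0 2) hu
    exact ⟨n, (pow_le_pow_of_le_one (norm_nonneg _) hu.le
      (Nat.lt_pow_self (by omega)).le).trans hn.le⟩
  induction n generalizing u with
  | zero => exact exists_tendsto_trunc_of_small hπ0 hπ1 hq (by simpa using hn)
  | succ n ih =>
    have hle := norm_pow_le_self hq hu.le
    have h1 : ‖u ^ q‖ ^ q ^ n ≤ ‖π‖ ^ 2 := by rwa [norm_pow, ← pow_mul, ← pow_succ']
    have h2 : ‖(u ^ q) ^ q‖ ^ q ^ n ≤ ‖π‖ ^ 2 :=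
      (pow_le_pow_left₀ (norm_nonneg _) (norm_pow_le_self hq (hle.trans hu.le)) _).trans h1
    obtain ⟨a, ha⟩ := ih (hle.trans_lt hu) h1
    obtain ⟨b, hb⟩ := ih ((norm_pow_le_self hq (hle.trans hu.le)).trans_lt (hle.trans_lt hu)) h2
    refine ⟨(u / π * a.2 + b.1, u * a.1 + b.2), (tendsto_add_atTop_iff_nat 2).1 ?_⟩
    have ha' := (tendsto_add_atTop_iff_nat 1).2 ha
    simp only [trunc]
    exact ((ha'.snd_nhds.const_mul _).add hb.fst_nhds).prodMk_nhds
      ((ha'.fst_nhds.const_mul _).add hb.snd_nhds)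

lemma tendsto_trunc [CompleteSpace C] {π : C} (hπ0 : 0 < ‖π‖) (hπ1 : ‖π‖ < 1)
    {q : ℕ} (hq : 2 ≤ q) {u : C} (hu : ‖u‖ < 1) :
    Tendsto (fun N => (trunc π q N u).1) atTop (nhds (ghphi0 π q u)) ∧
      Tendsto (fun N => (trunc π q N u).2) atTop (nhds (ghphi1 π q u)) := by
  obtain ⟨l, hl⟩ := exists_tendsto_trunc hπ0 hπ1 hq hu
  have hπ : π ≠ 0 := norm_pos_iff.1 hπ0
  have e0 : ghphi0 π q u = l.1 := by
    refine Tendsto.limUnder_eq ?_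
    have h : Tendsto (fun k : ℕ => 2 * k) atTop atTop :=
      tendsto_atTop_mono (fun k => show k ≤ 2 * k by omega) tendsto_id
    simpa only [Function.comp_def, (trunc_eq_ghm hπ q _ u).1] using hl.fst_nhds.comp h
  have e1 : ghphi1 π q u = l.2 := by
    refine Tendsto.limUnder_eq ?_
    have h : Tendsto (fun k : ℕ => 2 * k + 1) atTop atTop :=
      tendsto_atTop_mono (fun k => show k ≤ 2 * k + 1 by omega) tendsto_id
    simpa only [Function.comp_def, (trunc_eq_ghm hπ q _ u).2.2.1] using hl.snd_nhds.comp h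
  rw [e0, e1]
  exact ⟨hl.fst_nhds, hl.snd_nhds⟩

lemma ghphi_functional_equation [CompleteSpace C] {π : C} (hπ0 : 0 < ‖π‖) (hπ1 : ‖π‖ < 1)
    {q : ℕ} (hq : 2 ≤ q) {u : C} (hu : ‖u‖ < 1) :
    ghphi0 π q u = u / π * ghphi1 π q (u ^ q) + ghphi0 π q ((u ^ q) ^ q) ∧
      ghphi1 π q u = u * ghphi0 π q (u ^ q) + ghphi1 π q ((u ^ q) ^ q) := by
  have hle := (norm_pow_le_self hq hu.le).trans_lt hu
  have t := tendsto_trunc hπ0 hπ1 hq hu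
  have t1 := tendsto_trunc hπ0 hπ1 hq hle
  have t2 := tendsto_trunc hπ0 hπ1 hq ((norm_pow_le_self hq hle.le).trans_lt hle)
  constructor
  · refine tendsto_nhds_unique ((tendsto_add_atTop_iff_nat 2).2 t.1) ?_
    simp only [trunc]
    exact (((tendsto_add_atTop_iff_nat 1).2 t1.2).const_mul _).add t2.1
  · refine tendsto_nhds_unique ((tendsto_add_atTop_iff_nat 2).2 t.2) ?_
    simp only [trunc]
    exact (((tendsto_add_atTop_iff_nat 1).2 t1.1).const_mul _).add t2.2

end Truncation

section Wronskian

variable {C : Type*} [NormedField C] [IsUltrametricDist C]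

/-- With `P N u` the matrix of columns `F N u` and `J (F (N - 1) (u ^ q))`, this bounds the entries
of `(P N v)⁻¹ * P N u`; the lower left entry is a two-point Wronskian of `φ₀` and `φ₁`. -/
lemma trunc_wronskian_estimates {p r : ℕ} (hp : p.Prime) {π : C} (hπ0 : 0 < ‖π‖) (hπ1 : ‖π‖ < 1)
    (hpπ : ‖(p : C)‖ ≤ ‖π‖) {q : ℕ} (hq : 2 ≤ q) (hqp : q = p ^ r) {θ : ℝ} (hθ : θ < 1) (N : ℕ) :
    ∀ (u v : C) (γ : ℝ), 0 < γ → γ ≤ 1 → γ ^ (q + 1) ≤ θ → ‖u‖ ≤ γ → ‖v‖ ≤ γ →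
      ‖u - v‖ ^ (q - 1) * γ ^ 2 ≤ θ * ‖π‖ →
      let A := fun n x => (trunc π q n x).1
      let B := fun n x => (trunc π q n x).2
      let a := A N (v ^ q) * A (N + 1) u - B N (v ^ q) * B (N + 1) u / π
      let d := A (N + 1) v * A N (u ^ q) - B (N + 1) v * B N (u ^ q) / π
      ‖a - 1‖ ≤ θ ∧ ‖d - 1‖ ≤ θ ∧ ‖π‖ * ‖a - d‖ ≤ γ * ‖u ^ q - v ^ q‖ ∧
      ‖B (N + 1) u * A (N + 1) v - B (N + 1) v * A (N + 1) u - (u - v)‖ ≤ θ * ‖u - v‖ ∧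
      ‖B N u * A N v - B N v * A N u‖ ≤ ‖u - v‖ := by
  have hπ : π ≠ 0 := norm_pos_iff.1 hπ0
  induction N with
  | zero =>
    intro u v γ hγ0 hγ1 hγθ hu hv hδ
    have hθ0 : 0 ≤ θ := (by positivity : (0 : ℝ) ≤ γ ^ (q + 1)).trans hγθ
    simp only [trunc, mul_one, zero_mul, zero_div, sub_zero, sub_self, norm_zero, mul_zero, hθ0,
      norm_nonneg, and_true, true_and]
    constructor <;> positivity
  | succ N ih =>
    intro u v γ hγ0 hγ1 hγθ hu hv hδ A B
    have hθ0 : 0 ≤ θ := (by positivity : (0 : ℝ) ≤ γ ^ (q + 1)).trans hγθ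
    -- contraction of distances under the `q`-th power
    have contr : ∀ (x y : C) (g : ℝ), ‖x‖ ≤ g → ‖y‖ ≤ g → ‖x ^ q - y ^ q‖ ≤
        max (‖x - y‖ ^ q) (‖π‖ * g ^ (q - 1) * ‖x - y‖) := by
      intro x y g hx hy
      rw [hqp]
      exact norm_pow_sub_pow_le hp x y hpπ hx hy
    have lip : ∀ (x y : C) (g : ℝ), ‖x‖ ≤ g → ‖y‖ ≤ g →
        ‖x ^ q - y ^ q‖ ≤ g ^ (q - 1) * ‖x - y‖ := by
      intro x y g hx hy
      have hg : 0 ≤ g := (norm_nonneg x).trans hx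
      refine (contr x y g hx hy).trans (max_le ?_ ?_)
      · rw [← pow_sub_one_mul (by omega : q ≠ 0)]
        gcongr
        exact norm_sub_le_of_le hx hy
      · gcongr
        exact mul_le_of_le_one_left (by positivity) hπ1.le
    set δ := ‖u - v‖ with hδdef
    have hδγ : δ ≤ γ := norm_sub_le_of_le hu hv
    have hδ0 : 0 ≤ δ := norm_nonneg _
    set δ₁ := ‖u ^ q - v ^ q‖ with hδ₁
    set δ₂ := ‖(u ^ q) ^ q - (v ^ q) ^ q‖ with hδ₂
    have hδ₁0 : 0 ≤ δ₁ := norm_nonneg _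
    have hu1 : ‖u ^ q‖ ≤ γ ^ q := by rw [norm_pow]; gcongr
    have hv1 : ‖v ^ q‖ ≤ γ ^ q := by rw [norm_pow]; gcongr
    have hγq : γ ^ q ≤ γ := pow_le_of_le_one hγ0.le hγ1 (by omega)
    have hγq1 : γ ^ q ≤ 1 := hγq.trans hγ1
    have hγqθ : (γ ^ q) ^ (q + 1) ≤ θ :=
      (pow_le_pow_left₀ (by positivity) hγq _).trans hγθ
    -- the key contraction at the first level
    have h1 : δ₁ * γ ^ 2 ≤ θ * ‖π‖ * δ := by
      have := contr u v γ hu hv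
      rcases le_max_iff.1 this with h | h
      · rw [← pow_sub_one_mul (by omega : q ≠ 0) ‖u - v‖] at h
        calc δ₁ * γ ^ 2 ≤ (δ ^ (q - 1) * δ) * γ ^ 2 := by gcongr
          _ = (δ ^ (q - 1) * γ ^ 2) * δ := by ring
          _ ≤ _ := by gcongr
      · calc δ₁ * γ ^ 2 ≤ (‖π‖ * γ ^ (q - 1) * δ) * γ ^ 2 := by gcongr
          _ = γ ^ (q - 1 + 2) * ‖π‖ * δ := by ring
          _ = γ ^ (q + 1) * ‖π‖ * δ := by rw [show q - 1 + 2 = q + 1 by omega]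
          _ ≤ _ := by gcongr
    have hcond1 : δ₁ ^ (q - 1) * (γ ^ q) ^ 2 ≤ θ * ‖π‖ := by
      have e : γ ^ q = γ ^ (q - 1) * γ := (pow_sub_one_mul (by omega) _).symm
      calc δ₁ ^ (q - 1) * (γ ^ q) ^ 2 = (δ₁ * γ ^ 2) ^ (q - 1) * γ ^ 2 := by
            rw [e, mul_pow δ₁, ← pow_mul γ 2, mul_pow, ← pow_mul γ, mul_comm (q - 1) 2]; ring
        _ ≤ (θ * ‖π‖ * δ) ^ (q - 1) * γ ^ 2 := by gcongr
        _ ≤ (1 * δ) ^ (q - 1) * γ ^ 2 := by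
            gcongr
            nlinarith
        _ ≤ _ := by rwa [one_mul]
    have h2le : δ₂ ≤ δ₁ := (lip _ _ _ hu1 hv1).trans
      (mul_le_of_le_one_left hδ₁0 (pow_le_one₀ (by positivity) hγq1))
    have hδ₂δ : δ₂ ≤ θ * δ := by
      calc δ₂ ≤ (γ ^ q) ^ (q - 1) * (γ ^ (q - 1) * δ) :=
            (lip _ _ _ hu1 hv1).trans (by gcongr; exact lip u v γ hu hv)
        _ = (γ ^ (q + 1)) ^ (q - 1) * δ := by rw [← mul_assoc, ← mul_pow, ← pow_succ]
        _ ≤ γ ^ (q + 1) * δ := by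
            gcongr
            exact pow_le_of_le_one (by positivity) (pow_le_one₀ hγ0.le hγ1) (by omega)
        _ ≤ _ := by gcongr
    have hγδ₁ : γ * δ₁ ≤ θ * ‖π‖ := by
      have : γ * (γ * δ₁) ≤ γ * (θ * ‖π‖) := by
        calc γ * (γ * δ₁) = δ₁ * γ ^ 2 := by ring
          _ ≤ θ * ‖π‖ * δ := h1
          _ ≤ θ * ‖π‖ * γ := by gcongr
          _ = _ := by ring
      exact le_of_mul_le_mul_left this hγ0
    have hγγδ₂ : γ * (γ ^ q * δ₂) ≤ θ * δ * ‖π‖ := by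
      calc γ * (γ ^ q * δ₂) ≤ γ * (γ * δ₁) := by gcongr
        _ = δ₁ * γ ^ 2 := by ring
        _ ≤ _ := h1
        _ = _ := by ring
    obtain ⟨ia, id', iad, ic, -⟩ := ih _ _ _ (pow_pos hγ0 q) hγq1 hγqθ hu1 hv1 hcond1
    have hu2 : ‖(u ^ q) ^ q‖ ≤ γ ^ q := by
      rw [norm_pow]
      exact (pow_le_of_le_one (norm_nonneg _) (hu1.trans hγq1) (by omega)).trans hu1
    have hv2 : ‖(v ^ q) ^ q‖ ≤ γ ^ q := by
      rw [norm_pow]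
      exact (pow_le_of_le_one (norm_nonneg _) (hv1.trans hγq1) (by omega)).trans hv1
    obtain ⟨-, -, -, -, ic2⟩ := ih _ _ _ (pow_pos hγ0 q) hγq1 hγqθ hu2 hv2
      ((mul_le_mul_of_nonneg_right (pow_le_pow_left₀ (norm_nonneg _) h2le _)
        (by positivity)).trans hcond1)
    have hc1 : ‖B (N + 1) (u ^ q) * A (N + 1) (v ^ q) - B (N + 1) (v ^ q) * A (N + 1) (u ^ q)‖
        ≤ δ₁ := by
      rw [← sub_add_cancel (_ - _ : C) (u ^ q - v ^ q)]
      exact norm_add_le_of_le (ic.trans (mul_le_of_le_one_left hδ₁0 hθ.le)) le_rfl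
    have hA : ∀ x, A (N + 2) x = x / π * B (N + 1) (x ^ q) + A N ((x ^ q) ^ q) :=
      fun x => trunc_fst_add_two π q N x
    have hB : ∀ x, B (N + 2) x = x * A (N + 1) (x ^ q) + B N ((x ^ q) ^ q) :=
      fun x => trunc_snd_add_two π q N x
    change ‖_ * A (N + 2) u - _ * B (N + 2) u / π - 1‖ ≤ _ ∧
      ‖A (N + 2) v * _ - B (N + 2) v * _ / π - 1‖ ≤ _ ∧
      _ * ‖(_ * A (N + 2) u - _ * B (N + 2) u / π) - (A (N + 2) v * _ - B (N + 2) v * _ / π)‖ ≤ _ ∧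
      ‖B (N + 2) u * A (N + 2) v - B (N + 2) v * A (N + 2) u - _‖ ≤ _ ∧ _
    change ‖A N _ * A (N + 1) _ - B N _ * B (N + 1) _ / π - 1‖ ≤ _ at ia
    change ‖A (N + 1) _ * A N _ - B (N + 1) _ * B N _ / π - 1‖ ≤ _ at id'
    change ‖π‖ * ‖(A N _ * A (N + 1) _ - B N _ * B (N + 1) _ / π)
      - (A (N + 1) _ * A N _ - B (N + 1) _ * B N _ / π)‖ ≤ _ * δ₂ at iad
    change ‖B N _ * A N _ - B N _ * A N _‖ ≤ δ₂ at ic2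
    simp only [hA, hB]
    set a₁ := A N ((v ^ q) ^ q) * A (N + 1) (u ^ q) - B N ((v ^ q) ^ q) * B (N + 1) (u ^ q) / π
      with ha₁
    set d₁ := A (N + 1) (v ^ q) * A N ((u ^ q) ^ q) - B (N + 1) (v ^ q) * B N ((u ^ q) ^ q) / π
      with hd₁
    set c₁ := B (N + 1) (u ^ q) * A (N + 1) (v ^ q) - B (N + 1) (v ^ q) * A (N + 1) (u ^ q)
      with hc₁
    set c₂ := B N ((u ^ q) ^ q) * A N ((v ^ q) ^ q) - B N ((v ^ q) ^ q) * A N ((u ^ q) ^ q)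
      with hc₂
    have hxc : ∀ x : C, ‖x‖ ≤ γ → ‖x * c₁ / π‖ ≤ γ * δ₁ / ‖π‖ := by
      intro x hx
      rw [norm_div, norm_mul]
      gcongr
    have hγδπ : γ * δ₁ / ‖π‖ ≤ θ := by rwa [div_le_iff₀ hπ0]
    have hda : ‖d₁ - a₁‖ ≤ γ * δ₁ / ‖π‖ := by
      rw [le_div_iff₀ hπ0, mul_comm, norm_sub_rev]
      exact iad.trans (by gcongr)
    refine ⟨?_, ?_, ?_, ?_, ?_⟩
    · refine (congrArg norm (?_ : _ = (d₁ - 1) + u * c₁ / π)).trans_le ?_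
      · rw [hd₁, hc₁]; ring
      exact norm_add_le_of_le id' ((hxc u hu).trans hγδπ)
    · refine (congrArg norm (?_ : _ = (a₁ - 1) - v * c₁ / π)).trans_le ?_
      · rw [ha₁, hc₁]; ring
      exact norm_sub_le_of_le ia ((hxc v hv).trans hγδπ)
    · rw [mul_comm, ← le_div_iff₀ hπ0]
      refine (congrArg norm (?_ : _ = (d₁ - a₁) + u * c₁ / π + v * c₁ / π)).trans_le ?_
      · rw [ha₁, hd₁, hc₁]; ring
      exact norm_add_le_of_le (norm_add_le_of_le hda (hxc u hu)) (hxc v hv)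
    · refine (congrArg norm (?_ : _ =
        (u - v) * (a₁ - 1) + v * (a₁ - d₁) + c₂ - u * (v * c₁ / π))).trans_le ?_
      · rw [ha₁, hd₁, hc₁, hc₂]; field_simp; ring
      refine norm_sub_le_of_le (norm_add_le_of_le (norm_add_le_of_le ?_ ?_) (ic2.trans hδ₂δ)) ?_
      · rw [norm_mul, mul_comm θ]
        gcongr
      · have : ‖a₁ - d₁‖ ≤ γ ^ q * δ₂ / ‖π‖ := by rwa [le_div_iff₀ hπ0, mul_comm]
        calc ‖v * (a₁ - d₁)‖ ≤ γ * (γ ^ q * δ₂ / ‖π‖) := by rw [norm_mul]; gcongr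
          _ = γ * (γ ^ q * δ₂) / ‖π‖ := by ring
          _ ≤ _ := by rwa [div_le_iff₀ hπ0]
      · calc ‖u * (v * c₁ / π)‖ ≤ γ * (γ * δ₁ / ‖π‖) := by
              rw [norm_mul]; exact mul_le_mul hu (hxc v hv) (norm_nonneg _) hγ0.le
          _ = δ₁ * γ ^ 2 / ‖π‖ := by ring
          _ ≤ _ := by rw [div_le_iff₀ hπ0]; linarith
    · obtain ⟨-, -, -, ic0, -⟩ := ih u v γ hγ0 hγ1 hγθ hu hv hδ
      rw [← sub_add_cancel (_ - _ : C) (u - v)]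
      exact norm_add_le_of_le (ic0.trans (mul_le_of_le_one_left hδ0 hθ.le)) le_rfl

lemma norm_wronskian_sub_le [CompleteSpace C] {p r : ℕ} (hp : p.Prime) {π : C} (hπ0 : 0 < ‖π‖)
    (hπ1 : ‖π‖ < 1) (hpπ : ‖(p : C)‖ ≤ ‖π‖) {q : ℕ} (hq : 2 ≤ q) (hqp : q = p ^ r) {θ : ℝ}
    (hθ : θ < 1) {u v : C} {γ : ℝ} (hγ0 : 0 < γ) (hγ1 : γ < 1) (hγθ : γ ^ (q + 1) ≤ θ)
    (hu : ‖u‖ ≤ γ) (hv : ‖v‖ ≤ γ) (hδ : ‖u - v‖ ^ (q - 1) * γ ^ 2 ≤ θ * ‖π‖) :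
    ‖ghphi1 π q u * ghphi0 π q v - ghphi1 π q v * ghphi0 π q u - (u - v)‖ ≤ θ * ‖u - v‖ := by
  have tu := tendsto_trunc hπ0 hπ1 hq (hu.trans_lt hγ1)
  have tv := tendsto_trunc hπ0 hπ1 hq (hv.trans_lt hγ1)
  have t := (((tu.2.mul tv.1).sub (tv.2.mul tu.1)).sub_const (u - v)).norm
  refine le_of_tendsto ((tendsto_add_atTop_iff_nat 1).2 t) (Eventually.of_forall fun N => ?_)
  exact (trunc_wronskian_estimates hp hπ0 hπ1 hpπ hq hqp hθ N u v γ hγ0 hγ1.le hγθ hu hv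
    hδ).2.2.2.1

end Wronskian

section LeadingTerm

variable {C : Type*} [NormedField C] [IsUltrametricDist C]

lemma norm_trunc_sub_one_le {π : C} (hπ0 : 0 < ‖π‖) (hπ1 : ‖π‖ < 1) {q : ℕ} (hq : 2 ≤ q) (N : ℕ) :
    ∀ u : C, ‖u‖ ^ (q + 1) ≤ ‖π‖ →
      ‖(trunc π q N u).1 - 1‖ ≤ ‖u‖ ^ (q + 1) / ‖π‖ ∧ ‖(trunc π q N u).2‖ ≤ ‖u‖ := by
  induction N using Nat.twoStepInduction with
  | zero =>
    intro u _
    simp only [trunc, sub_self, norm_zero, norm_nonneg, and_true]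
    positivity
  | one =>
    intro u _
    simp only [trunc, sub_self, norm_zero, le_refl, and_true]
    positivity
  | more N ih1 ih2 =>
    intro u hu
    have hu1 : ‖u‖ ≤ 1 := by
      by_contra! h
      exact absurd (hu.trans hπ1.le) (not_le.2 (one_lt_pow₀ h (by omega)))
    have ha := norm_pow_le_self hq hu1
    have hb := norm_pow_le_self hq (ha.trans hu1)
    have hb' := hb.trans ha
    have ha2 : ‖u ^ q‖ ^ (q + 1) ≤ ‖u‖ ^ (q + 1) := by gcongr
    have hb2 : ‖(u ^ q) ^ q‖ ^ (q + 1) ≤ ‖u‖ ^ (q + 1) := by gcongr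
    have i1 := ih1 _ (hb2.trans hu)
    have i2 := ih2 _ (ha2.trans hu)
    rw [trunc_fst_add_two, trunc_snd_add_two]
    constructor
    · rw [add_sub_assoc]
      refine norm_add_le_of_le ?_ (i1.1.trans (by gcongr))
      rw [norm_mul, norm_div, pow_succ', ← norm_pow u q, div_mul_eq_mul_div]
      gcongr
      exact i2.2
    · refine norm_add_le_of_le ?_ (i1.2.trans hb')
      rw [norm_mul]
      refine mul_le_of_le_one_right (norm_nonneg _) ?_
      rw [← sub_add_cancel (trunc π q (N + 1) (u ^ q)).1 1]
      refine norm_add_le_of_le (i2.1.trans ?_) norm_one.le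
      rw [div_le_one hπ0]
      exact ha2.trans hu

lemma norm_ghphi_of_small [CompleteSpace C] {π : C} (hπ0 : 0 < ‖π‖) (hπ1 : ‖π‖ < 1) {q : ℕ}
    (hq : 2 ≤ q) {u : C} (hu1 : ‖u‖ < 1) (hu : ‖u‖ ^ (q + 1) ≤ ‖π‖) :
    ‖ghphi0 π q u - 1‖ ≤ ‖u‖ ^ (q + 1) / ‖π‖ ∧ ‖ghphi1 π q u‖ ≤ ‖u‖ := by
  have t := tendsto_trunc hπ0 hπ1 hq hu1
  exact ⟨le_of_tendsto (t.1.sub_const 1).norm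
      (Eventually.of_forall fun N => (norm_trunc_sub_one_le hπ0 hπ1 hq N u hu).1),
    le_of_tendsto t.2.norm
      (Eventually.of_forall fun N => (norm_trunc_sub_one_le hπ0 hπ1 hq N u hu).2)⟩

/-- On the annulus `|π|^{1/(q^{2m-1}+q^{2m-2})} < |u| < |π|^{1/(q^{2m+1}+q^{2m})}`, the value `φ₀(u)`
is dominated by the term `π^{-m} u^{1 + q + ⋯ + q^{2m-1}}`. -/
lemma exists_norm_ghphi0_sub_leading_le [CompleteSpace C] {π : C} (hπ0 : 0 < ‖π‖)
    (hπ1 : ‖π‖ < 1) {q : ℕ} (hq : 2 ≤ q) (m : ℕ) :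
    ∀ γ : ℝ, 0 < γ → γ < 1 → (γ ^ q ^ (2 * m)) ^ (q + 1) < ‖π‖ →
      (∀ k < m, ‖π‖ < (γ ^ q ^ (2 * k)) ^ (q + 1)) →
      ∃ θ < 1, ∀ u : C, ‖u‖ = γ →
        ‖ghphi0 π q u - u ^ (∑ i ∈ Finset.range (2 * m), q ^ i) / π ^ m‖ ≤
          θ * ‖u ^ (∑ i ∈ Finset.range (2 * m), q ^ i) / π ^ m‖ ∧
        ‖ghphi1 π q (u ^ q)‖ ≤
          (if m = 0 then γ ^ q else ‖π‖ / γ) *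
            ‖u ^ (∑ i ∈ Finset.range (2 * m), q ^ i) / π ^ m‖ := by
  have hπ : π ≠ 0 := norm_pos_iff.1 hπ0
  induction m with
  | zero =>
    intro γ hγ0 hγ1 hlt _
    simp only [mul_zero, pow_zero, pow_one] at hlt
    refine ⟨γ ^ (q + 1) / ‖π‖, (div_lt_one hπ0).2 hlt, fun u hu => ?_⟩
    have h0 := norm_ghphi_of_small hπ0 hπ1 hq (hu.trans_lt hγ1) (by rw [hu]; exact hlt.le)
    have hle := norm_pow_le_self hq (hu.trans_lt hγ1).le
    have h1 := norm_ghphi_of_small hπ0 hπ1 hq (hle.trans_lt (hu.trans_lt hγ1))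
      ((pow_le_pow_left₀ (norm_nonneg _) hle _).trans (by rw [hu]; exact hlt.le))
    simp only [mul_zero, Finset.range_zero, Finset.sum_empty, pow_zero, div_one, norm_one, mul_one,
      if_true]
    rw [← hu, ← norm_pow u q]
    exact ⟨h0.1, h1.2⟩
  | succ m ih =>
    intro γ hγ0 hγ1 hlt hgt
    have hpow : ∀ k, ((γ ^ q) ^ q) ^ q ^ (2 * k) = γ ^ q ^ (2 * (k + 1)) := by
      intro k
      rw [← pow_mul, ← pow_mul]
      congr 1
      ring
    have hγq : γ ^ q ≤ γ := pow_le_of_le_one hγ0.le hγ1.le (by omega)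
    have hγqq : (γ ^ q) ^ q ≤ γ ^ q := pow_le_of_le_one (by positivity) (hγq.trans hγ1.le) (by omega)
    obtain ⟨θ, hθ, h⟩ := ih ((γ ^ q) ^ q) (by positivity) (hγqq.trans_lt (hγq.trans_lt hγ1))
      (by rw [hpow]; exact hlt) (fun k hk => by rw [hpow]; exact hgt (k + 1) (by omega))
    have hπγ : ‖π‖ < γ ^ (q + 1) := by simpa using hgt 0 (by omega)
    set κ : ℝ := if m = 0 then ((γ ^ q) ^ q) ^ q else ‖π‖ / (γ ^ q) ^ q with hκ
    have hκlt : κ < γ ^ q := by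
      rw [hκ]
      split_ifs with hm
      · have : (γ ^ q) ^ q < γ ^ q := by
          refine pow_lt_self_of_lt_one₀ (by positivity) (hγq.trans_lt hγ1) (by omega)
        refine lt_of_le_of_lt ?_ this
        exact pow_le_of_le_one (by positivity) (this.le.trans (hγq.trans hγ1.le)) (by omega)
      · rw [div_lt_iff₀ (by positivity)]
        have := hgt 1 (by omega)
        calc ‖π‖ < (γ ^ q ^ (2 * 1)) ^ (q + 1) := this
          _ = ((γ ^ q) ^ q) ^ q * (γ ^ q) ^ q := by rw [mul_one, sq, pow_mul, pow_succ]
          _ ≤ γ ^ q * (γ ^ q) ^ q := by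
            gcongr
            exact hγqq.trans hγq
    refine ⟨max θ (max (‖π‖ / γ ^ (q + 1)) (κ / γ ^ q)), ?_, fun u hu => ?_⟩
    · refine max_lt hθ (max_lt ?_ ?_) <;> rwa [div_lt_one (by positivity)]
    have hu1 : ‖u‖ < 1 := hu.trans_lt hγ1
    obtain ⟨i0, i1⟩ := h ((u ^ q) ^ q) (by rw [norm_pow, norm_pow, hu])
    set L := ((u ^ q) ^ q) ^ (∑ i ∈ Finset.range (2 * m), q ^ i) / π ^ m with hL
    have hlead : u ^ (∑ i ∈ Finset.range (2 * (m + 1)), q ^ i) / π ^ (m + 1)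
        = u ^ (q + 1) / π * L := by
      have : ∑ i ∈ Finset.range (2 * (m + 1)), q ^ i
          = (q + 1) + q * q * ∑ i ∈ Finset.range (2 * m), q ^ i := by
        rw [show 2 * (m + 1) = 2 * m + 1 + 1 by ring, Finset.sum_range_succ', Finset.sum_range_succ',
          Finset.mul_sum]
        simp only [pow_succ]
        ring_nf
      rw [this, hL, pow_add, pow_mul, pow_mul u]
      field_simp
      ring
    have hφ0 : ‖ghphi0 π q ((u ^ q) ^ q)‖ ≤ ‖L‖ := by
      rw [← sub_add_cancel (ghphi0 π q ((u ^ q) ^ q)) L]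
      exact norm_add_le_of_le (i0.trans (mul_le_of_le_one_left (norm_nonneg _) hθ.le)) le_rfl
    have e0 := (ghphi_functional_equation hπ0 hπ1 hq hu1).1
    have e1 := (ghphi_functional_equation hπ0 hπ1 hq
      ((norm_pow_le_self hq hu1.le).trans_lt hu1)).2
    have hnL : ‖u ^ (q + 1) / π * L‖ = γ ^ (q + 1) / ‖π‖ * ‖L‖ := by
      rw [norm_mul, norm_div, norm_pow, hu]
    have hmax : ∀ {x : C} {c : ℝ}, c ≤ max θ (max (‖π‖ / γ ^ (q + 1)) (κ / γ ^ q)) →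
        ‖x‖ ≤ c * (γ ^ (q + 1) / ‖π‖ * ‖L‖) →
        ‖x‖ ≤ max θ (max (‖π‖ / γ ^ (q + 1)) (κ / γ ^ q)) * (γ ^ (q + 1) / ‖π‖ * ‖L‖) :=
      fun hc hx => hx.trans (by gcongr)
    rw [hlead, hnL, if_neg (Nat.succ_ne_zero m)]
    constructor
    · rw [show ghphi0 π q u - u ^ (q + 1) / π * L =
          u ^ (q + 1) / π * (ghphi0 π q ((u ^ q) ^ q) - L) + ghphi0 π q ((u ^ q) ^ q) +
          u / π * ghphi1 π q (((u ^ q) ^ q) ^ q) by rw [e0, e1]; ring]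
      refine norm_add_le_of_le (norm_add_le_of_le (hmax (le_max_left _ _) ?_)
        (hmax ((le_max_left _ _).trans (le_max_right _ _)) ?_))
        (hmax ((le_max_right _ _).trans (le_max_right _ _)) ?_)
      · rw [norm_mul, norm_div, norm_pow, hu, mul_left_comm]
        gcongr
      · refine hφ0.trans (le_of_eq ?_)
        field_simp
      · rw [norm_mul, norm_div, hu]
        calc γ / ‖π‖ * ‖ghphi1 π q (((u ^ q) ^ q) ^ q)‖ ≤ γ / ‖π‖ * (κ * ‖L‖) := by gcongr
          _ = _ := by field_simp; ring
    · rw [e1]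
      have hγπ : ‖π‖ / γ * (γ ^ (q + 1) / ‖π‖ * ‖L‖) = γ ^ q * ‖L‖ := by field_simp; ring
      rw [hγπ]
      refine norm_add_le_of_le ?_ (i1.trans (by gcongr))
      rw [norm_mul, norm_pow, hu]
      gcongr

end LeadingTerm

section Period

lemma norm_pow_sub_pow_le_mul {C : Type*} [NormedField C] [IsUltrametricDist C] {u v : C}
    {γ θ : ℝ} (hγ0 : 0 < γ) (hu : ‖u‖ = γ) (hv : ‖v‖ = γ) (huv : ‖u - v‖ ≤ θ * γ) (n : ℕ) :
    ‖u ^ n - v ^ n‖ ≤ θ * γ ^ n := by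
  have hθ : 0 ≤ θ := nonneg_of_mul_nonneg_left ((norm_nonneg _).trans huv) hγ0
  induction n with
  | zero => simpa using hθ
  | succ n ih =>
    rw [show u ^ (n + 1) - v ^ (n + 1) = u * (u ^ n - v ^ n) + (u - v) * v ^ n by ring]
    refine norm_add_le_of_le ?_ ?_
    · rw [norm_mul, hu, pow_succ']
      nlinarith
    · rw [norm_mul, norm_pow, hv, pow_succ', ← mul_assoc]
      gcongr

/-- The period map in the affine coordinate `φ₁ / φ₀` is, after scaling, an isometric bijection from
the open disk of radius `r` with `r ^ (q - 1) * |u₀| ^ 2 = |π|` onto a disk. -/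
lemma bijOn_period_map {C : Type*} [NormedField C] [IsUltrametricDist C] [CompleteSpace C]
    {p a : ℕ} (hp : p.Prime) {π : C} (hπ0 : 0 < ‖π‖) (hπ1 : ‖π‖ < 1) (hpπ : ‖(p : C)‖ ≤ ‖π‖)
    {q : ℕ} (hq : 2 ≤ q) (hqp : q = p ^ a) (m : ℕ) (hm : 0 < m) {γ : ℝ} (hγ0 : 0 < γ) (hγ1 : γ < 1)
    (hlt : (γ ^ q ^ (2 * m)) ^ (q + 1) < ‖π‖) (hgt : ∀ k < m, ‖π‖ < (γ ^ q ^ (2 * k)) ^ (q + 1))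
    {u₀ : C} (hu₀ : ‖u₀‖ = γ) {r : ℝ} (hr : r ^ (q - 1) * γ ^ 2 = ‖π‖) :
    Set.BijOn (fun u => ghphi1 π q u / ghphi0 π q u) {u | ‖u - u₀‖ < r}
      {w | ‖w - ghphi1 π q u₀ / ghphi0 π q u₀‖ <
        r / (γ ^ (∑ i ∈ Finset.range (2 * m), q ^ i) / ‖π‖ ^ m) ^ 2} := by
  have hπ : π ≠ 0 := norm_pos_iff.1 hπ0
  obtain ⟨θ₀, hθ₀, hlead⟩ := exists_norm_ghphi0_sub_leading_le hπ0 hπ1 hq m γ hγ0 hγ1 hlt hgt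
  set M := ∑ i ∈ Finset.range (2 * m), q ^ i
  have hrγ : r < γ := by
    have h : r ^ (q - 1) * γ ^ 2 < γ ^ (q - 1) * γ ^ 2 := by
      rw [hr, ← pow_add, show q - 1 + 2 = q + 1 by omega]
      simpa using hgt 0 hm
    exact lt_of_pow_lt_pow_left₀ (q - 1) hγ0.le (lt_of_mul_lt_mul_right h (by positivity))
  have hL : ∀ u : C, ‖u‖ = γ → ‖u ^ M / π ^ m‖ = γ ^ M / ‖π‖ ^ m := by
    intro u hu
    rw [norm_div, norm_pow, norm_pow, hu]
  have hφ : ∀ u : C, ‖u‖ = γ → ‖ghphi0 π q u‖ = γ ^ M / ‖π‖ ^ m := by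
    intro u hu
    have hu0 : u ≠ 0 := norm_pos_iff.1 (hu ▸ hγ0)
    rw [← hL u hu]
    exact norm_eq_of_norm_sub_le hθ₀ (by positivity) (hlead u hu).1
  set Z := γ ^ M / ‖π‖ ^ m with hZ
  have hZ0 : 0 < Z := by positivity
  have hne : ∀ u : C, ‖u‖ = γ → ghphi0 π q u ≠ 0 := fun u hu =>
    norm_pos_iff.1 (by rw [hφ u hu]; exact hZ0)
  have hsphere : ∀ u : C, ‖u - u₀‖ < γ → ‖u‖ = γ := by
    intro u hu
    have := IsUltrametricDist.norm_add_eq_max_of_norm_ne_norm (hu.trans_eq hu₀.symm).ne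
    rw [sub_add_cancel] at this
    rw [this, hu₀, max_eq_right hu.le]
  have hl : ‖ghphi0 π q u₀ ^ 2‖ = Z ^ 2 := by rw [norm_pow, hφ u₀ hu₀]
  rw [← hl]
  refine bijOn_ball_of_approx_linear (pow_ne_zero 2 (hne u₀ hu₀)) fun ρ hρ => ?_
  rcases lt_or_ge ρ 0 with hρ0 | hρ0
  · exact ⟨0, one_pos, fun u v hu _ => absurd ((norm_nonneg _).trans hu) (not_le.2 hρ0)⟩
  set θ₁ := max (γ ^ (q + 1)) (ρ ^ (q - 1) * γ ^ 2 / ‖π‖) with hθ₁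
  have hθ₁1 : θ₁ < 1 := by
    refine max_lt (pow_lt_one₀ hγ0.le hγ1 (by omega)) ?_
    rw [div_lt_one hπ0, ← hr]
    have : ρ ^ (q - 1) < r ^ (q - 1) := pow_lt_pow_left₀ hρ hρ0 (by omega)
    gcongr
  set θ₂ := max θ₀ (ρ / γ) with hθ₂
  have hθ₂1 : θ₂ < 1 := max_lt hθ₀ ((div_lt_one hγ0).2 (hρ.trans hrγ))
  refine ⟨max θ₁ θ₂, max_lt hθ₁1 hθ₂1, fun u v hu hv => ?_⟩
  have hun := hsphere u (hu.trans_lt (hρ.trans hrγ))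
  have hvn := hsphere v (hv.trans_lt (hρ.trans hrγ))
  have hclose : ∀ x : C, ‖x‖ = γ → ‖x - u₀‖ ≤ ρ →
      ‖ghphi0 π q u₀ - ghphi0 π q x‖ ≤ θ₂ * Z := by
    intro x hx hxρ
    have h0 := (hlead u₀ hu₀).1
    have h1 := (hlead x hx).1
    rw [hL _ hx] at h1
    rw [hL _ hu₀] at h0
    have h2 : ‖u₀ ^ M / π ^ m - x ^ M / π ^ m‖ ≤ ρ / γ * Z := by
      rw [← sub_div, norm_div, norm_pow, hZ, ← mul_div_assoc]
      gcongr
      refine norm_pow_sub_pow_le_mul hγ0 hu₀ hx ?_ M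
      rwa [div_mul_cancel₀ _ hγ0.ne', norm_sub_rev]
    rw [show ghphi0 π q u₀ - ghphi0 π q x = (ghphi0 π q u₀ - u₀ ^ M / π ^ m)
      + (u₀ ^ M / π ^ m - x ^ M / π ^ m) - (ghphi0 π q x - x ^ M / π ^ m) by ring]
    have hl0 : θ₀ * Z ≤ θ₂ * Z := by gcongr; exact le_max_left _ _
    have hl1 : ρ / γ * Z ≤ θ₂ * Z := by gcongr; exact le_max_right _ _
    exact norm_sub_le_of_le (norm_add_le_of_le (h0.trans hl0) (h2.trans hl1)) (h1.trans hl0)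
  have hW := norm_wronskian_sub_le hp hπ0 hπ1 hpπ hq hqp hθ₁1 hγ0 hγ1 (le_max_left _ _) hun.le
    hvn.le (by
      have huv : ‖u - v‖ ≤ ρ := by
        rw [← sub_sub_sub_cancel_right u v u₀]; exact norm_sub_le_of_le hu hv
      calc ‖u - v‖ ^ (q - 1) * γ ^ 2 ≤ ρ ^ (q - 1) * γ ^ 2 := by gcongr
        _ = ρ ^ (q - 1) * γ ^ 2 / ‖π‖ * ‖π‖ := by field_simp
        _ ≤ θ₁ * ‖π‖ := by gcongr; exact le_max_right _ _)
  have hau := hne u hun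
  have hbv := hne v hvn
  have cu := hclose u hun hu
  have cv := hclose v hvn hv
  have nz := hφ u₀ hu₀
  have na := hφ u hun
  have nb := hφ v hvn
  generalize ghphi0 π q u₀ = z at *
  generalize ghphi0 π q u = x at *
  generalize ghphi0 π q v = y at *
  generalize ghphi1 π q u = x' at *
  generalize ghphi1 π q v = y' at *
  rw [show z ^ 2 * (x' / x - y' / y) - (u - v) =
      z ^ 2 / (x * y) * (x' * y - y' * x - (u - v))
        + ((z - x) * z + x * (z - y)) / (x * y) * (u - v) by field_simp; ring]
  refine norm_add_le_of_le ?_ ?_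
  · rw [norm_mul, norm_div, norm_mul, norm_pow, nz, na, nb, ← sq, div_self (by positivity), one_mul]
    refine hW.trans ?_
    gcongr
    exact le_max_left _ _
  · rw [norm_mul, norm_div, norm_mul x y, na, nb]
    gcongr
    rw [div_le_iff₀ (by positivity)]
    refine (norm_add_le_of_le (c := θ₂ * (Z * Z)) ?_ ?_).trans ?_
    · rw [norm_mul, nz, ← mul_assoc]; gcongr
    · rw [norm_mul, na, mul_left_comm]; gcongr
    · gcongr; exact le_max_right _ _

lemma radius_eq {P γ : ℝ} (hP : 0 < P) (hγ : 0 < γ) {q : ℕ} (hq : 2 ≤ q) (k : ℕ) :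
    P ^ (((2 * k + 1 : ℕ) : ℝ) + 1 + 1 / ((q : ℝ) - 1)) *
        γ ^ (-(2 : ℝ) * (q : ℝ) ^ (2 * k + 1 + 1) / ((q : ℝ) - 1)) =
      (P * γ ^ (-(2 : ℝ))) ^ ((1 : ℝ) / ((q : ℝ) - 1)) /
        (γ ^ (∑ i ∈ Finset.range (2 * (k + 1)), q ^ i) / P ^ (k + 1)) ^ 2 := by
  have hq1 : (q : ℝ) - 1 ≠ 0 := by
    have : (2 : ℝ) ≤ q := by exact_mod_cast hq
    linarith
  have hM : ((∑ i ∈ Finset.range (2 * (k + 1)), q ^ i : ℕ) : ℝ)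
      = ((q : ℝ) ^ (2 * k + 1 + 1) - 1) / ((q : ℝ) - 1) := by
    push_cast
    rw [geom_sum_eq (by intro h; exact hq1 (by rw [h, sub_self]))]
    congr 3
  generalize (∑ i ∈ Finset.range (2 * (k + 1)), q ^ i) = M at *
  rw [Real.mul_rpow hP.le (by positivity), ← Real.rpow_mul hγ.le]
  have e1 : ((2 * k + 1 : ℕ) : ℝ) + 1 + 1 / ((q : ℝ) - 1)
      = ((2 * (k + 1) : ℕ) : ℝ) + 1 / ((q : ℝ) - 1) := by push_cast; ring
  have e2 : -(2 : ℝ) * (q : ℝ) ^ (2 * k + 1 + 1) / ((q : ℝ) - 1)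
      = -(2 : ℝ) * (1 / ((q : ℝ) - 1)) - ((2 * M : ℕ) : ℝ) := by
    push_cast
    rw [hM]
    field_simp
    ring
  rw [e1, e2, Real.rpow_add hP, Real.rpow_sub hγ, Real.rpow_natCast, Real.rpow_natCast,
    pow_mul' P, pow_mul' γ]
  field_simp

end Period

end GrossHopkins

theorem period_map_image_bijection_odd {p : ℕ} [Fact p.Prime] {C : Type*} [NormedField C] [IsUltrametricDist C]
    [CompleteSpace C] [IsAlgClosed C] [Algebra ℚ_[p] C]
    (hiso : ∀ x : ℚ_[p], ‖algebraMap ℚ_[p] C x‖ = ‖x‖)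
    (K : IntermediateField ℚ_[p] C) (hKfin : FiniteDimensional ℚ_[p] K)
    (q : ℕ) (hq : ∃ r : ℕ, 0 < r ∧ q = p ^ r)
    (π : C) (hπK : π ∈ K) (hπ0 : 0 < ‖π‖) (hπ1 : ‖π‖ < 1)
    (hπunif : ∀ x ∈ K, ‖x‖ < 1 → ‖x‖ ≤ ‖π‖)
    (hres : ∃ S : Finset C, S.card = q ∧ (∀ s ∈ S, s ∈ K ∧ ‖s‖ ≤ 1) ∧
      (∀ x ∈ K, ‖x‖ ≤ 1 → ∃ s ∈ S, ‖x - s‖ < 1) ∧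
      (∀ s ∈ S, ∀ t ∈ S, s ≠ t → ‖s - t‖ = 1))
    (s : ℕ) (hs : Odd s) (hs1 : 1 ≤ s)
    (γ : ℝ) (h1 : ‖π‖ ^ ((1:ℝ)/((q:ℝ)^s + (q:ℝ)^(s-1))) < γ)
    (h2 : γ < ‖π‖ ^ ((1:ℝ)/((q:ℝ)^(s+2) + (q:ℝ)^(s+1))))
    (u0 : C) (hu0 : ‖u0‖ = γ) :
    Set.BijOn (fun u => ghphi1 π q u / ghphi0 π q u)
      {u : C | ‖u - u0‖ < (‖π‖ * γ ^ (-(2:ℝ))) ^ ((1:ℝ)/((q:ℝ)-1))}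
      {w : C | ‖w - ghphi1 π q u0 / ghphi0 π q u0‖ <
        ‖π‖ ^ ((s:ℝ) + 1 + 1/((q:ℝ)-1)) * γ ^ (-(2:ℝ) * (q:ℝ)^(s+1)/((q:ℝ)-1))} := by
  
  obtain ⟨a, ha, hqa⟩ := hq
  have hp : p.Prime := Fact.out
  have hq2 : 2 ≤ q := hqa ▸ hp.two_le.trans (Nat.le_self_pow ha.ne' p)
  obtain ⟨k, rfl⟩ := hs
  have hq0 : (0 : ℝ) < q := by exact_mod_cast (by omega : 0 < q)
  have hpnorm : ‖(p : C)‖ = ‖(p : ℚ_[p])‖ := by rw [← hiso, map_natCast]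
  have hpπ : ‖(p : C)‖ ≤ ‖π‖ :=
    hπunif _ (natCast_mem K p) (hpnorm ▸ Padic.norm_p_lt_one)
  have hγ0 : 0 < γ := (Real.rpow_pos_of_pos hπ0 _).trans h1
  have hγ1 : γ < 1 := h2.trans (Real.rpow_lt_one hπ0.le hπ1 (by positivity))
  rw [one_div, Real.lt_rpow_inv_iff_of_pos hγ0.le hπ0.le (by positivity)] at h2
  rw [one_div, Real.rpow_inv_lt_iff_of_pos hπ0.le hγ0.le (by positivity)] at h1
  have hlow : ‖π‖ < (γ ^ q ^ (2 * k)) ^ (q + 1) := by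
    convert h1 using 1
    rw [← pow_mul, ← Real.rpow_natCast, Nat.add_sub_cancel]
    congr 1
    push_cast
    ring
  have hup : (γ ^ q ^ (2 * (k + 1))) ^ (q + 1) < ‖π‖ := by
    convert h2 using 1
    rw [← pow_mul, ← Real.rpow_natCast]
    congr 1
    push_cast
    ring
  have hq1 : ((q - 1 : ℕ) : ℝ) = (q : ℝ) - 1 := by rw [Nat.cast_sub (by omega), Nat.cast_one]
  rw [GrossHopkins.radius_eq hπ0 hγ0 hq2 k]
  refine GrossHopkins.bijOn_period_map hp hπ0 hπ1 hpπ hq2 hqa (k + 1) k.succ_pos hγ0 hγ1 hup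
    (fun j hj => hlow.trans_le ?_) hu0 ?_
  · refine pow_le_pow_left₀ (by positivity) (pow_le_pow_of_le_one hγ0.le hγ1.le ?_) _
    exact Nat.pow_le_pow_right (by omega) (by omega)
  · rw [one_div, ← hq1, Real.rpow_inv_natCast_pow (by positivity) (by omega), Real.rpow_neg hγ0.le,
      Real.rpow_two, inv_mul_cancel_right₀ (by positivity)]
end

section
/- Let s ≥ 0 be an even integer, set γ = |π|^{1/(q^{s+1}+q^s)}, and let u_0 ∈ ℂ_p with |u_0| = γ. Then φ_1(u) ≠ 0 for every u with |u − u_0| < (|π|·γ^{-2})^{1/(q-1)}, and the map u ↦ φ_0(u)/φ_1(u) is a bijection from the open disk {u ∈ ℂ_p : |u − u_0| < (|π|·γ^{-2})^{1/(q-1)}} onto the open disk {z ∈ ℂ_p : |z − φ_0(u_0)/φ_1(u_0)| < |π|^{s − 1/(q+1)}}. -/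
open Filter


section UltrametricInverse

variable {C : Type*} [NormedField C] [IsUltrametricDist C]

/-- A map of a complete ultrametric field that is, uniformly on smaller closed disks, a strict
perturbation of multiplication by `c` maps an open disk bijectively onto an open disk. -/
lemma bijOn_ball_of_approx_linear [CompleteSpace C] (f : C → C) (c u0 : C) (hc : c ≠ 0) (R : ℝ)
    (h : ∀ ρ : ℝ, 0 ≤ ρ → ρ < R → ∃ θ : ℝ, 0 ≤ θ ∧ θ < 1 ∧ ∀ u v : C, ‖u - u0‖ ≤ ρ → ‖v - u0‖ ≤ ρ →
      ‖f u - f v - c * (u - v)‖ ≤ θ * (‖c‖ * ‖u - v‖)) :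
    Set.BijOn f {u : C | ‖u - u0‖ < R} {z : C | ‖z - f u0‖ < ‖c‖ * R} := by
  have hc' : 0 < ‖c‖ := norm_pos_iff.2 hc
  refine ⟨fun u hu => ?_, fun u hu v hv huv => ?_, fun z hz => ?_⟩
  · obtain ⟨θ, -, hθ1, hθ⟩ := h _ (norm_nonneg _) hu
    have h1 := hθ u u0 le_rfl (by simp)
    have h2 : f u - f u0 = (f u - f u0 - c * (u - u0)) + c * (u - u0) := by ring
    have h3 : ‖f u - f u0‖ ≤ ‖c‖ * ‖u - u0‖ := by
      rw [h2]
      refine (IsUltrametricDist.norm_add_le_max _ _).trans (max_le (h1.trans ?_) (norm_mul_le _ _))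
      exact mul_le_of_le_one_left (by positivity) hθ1.le
    exact h3.trans_lt (mul_lt_mul_of_pos_left hu hc')
  · obtain ⟨θ, -, hθ1, hθ⟩ := h (max ‖u - u0‖ ‖v - u0‖) (le_max_of_le_left (norm_nonneg _))
      (max_lt hu hv)
    have h1 := hθ u v (le_max_left _ _) (le_max_right _ _)
    simp only [huv, sub_self, zero_sub, norm_neg, norm_mul] at h1
    by_contra hne
    have h2 : 0 < ‖c‖ * ‖u - v‖ := mul_pos hc' (norm_pos_iff.2 (sub_ne_zero.2 hne))
    nlinarith
  · set ρ := ‖z - f u0‖ / ‖c‖ with hρ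
    have hρ0 : 0 ≤ ρ := by positivity
    obtain ⟨θ, hθ0, hθ1, hθ⟩ := h ρ hρ0 (by rw [hρ, div_lt_iff₀ hc', mul_comm]; exact hz)
    let T : C → C := fun u => u - (f u - z) / c
    have hT : ∀ u v : C, ‖u - u0‖ ≤ ρ → ‖v - u0‖ ≤ ρ → ‖T u - T v‖ ≤ θ * ‖u - v‖ := by
      intro u v hu hv
      have h1 : T u - T v = -(f u - f v - c * (u - v)) / c := by simp only [T]; field_simp; ring
      rw [h1, norm_div, norm_neg, div_le_iff₀ hc']
      linarith [hθ u v hu hv]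
    have hmaps : Set.MapsTo T (Metric.closedBall u0 ρ) (Metric.closedBall u0 ρ) := by
      intro u hu
      rw [mem_closedBall_iff_norm] at hu ⊢
      have h1 : T u - u0 = (T u - T u0) + (z - f u0) / c := by simp only [T]; ring
      rw [h1]
      refine (IsUltrametricDist.norm_add_le_max _ _).trans (max_le ?_ (by rw [norm_div]))
      exact (hT u u0 hu (by simpa using hρ0)).trans
        ((mul_le_of_le_one_left (norm_nonneg _) hθ1.le).trans hu)
    have hcontr : ContractingWith ⟨θ, hθ0⟩ (hmaps.restrict T _ _) := by
      refine ⟨by exact_mod_cast hθ1, LipschitzWith.of_dist_le_mul fun u v => ?_⟩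
      have hu := mem_closedBall_iff_norm.1 u.2
      have hv := mem_closedBall_iff_norm.1 v.2
      rw [Subtype.dist_eq, Subtype.dist_eq, dist_eq_norm, dist_eq_norm]
      exact hT u v hu hv
    obtain ⟨y, hy, hfix, -⟩ := hcontr.exists_fixedPoint' Metric.isClosed_closedBall.isComplete
      hmaps (Metric.mem_closedBall_self hρ0) (edist_ne_top _ _)
    refine ⟨y, ?_, ?_⟩
    · refine (mem_closedBall_iff_norm.1 hy).trans_lt ?_
      rw [hρ, div_lt_iff₀ hc', mul_comm]; exact hz
    · have h1 : y - (f y - z) / c = y := hfix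
      have h2 : (f y - z) / c = 0 := by linear_combination -h1
      rcases div_eq_zero_iff.1 h2 with h3 | h3
      · exact sub_eq_zero.1 h3
      · exact absurd h3 hc

lemma norm_pow_prime_pow_sub_le {p : ℕ} (hp : p.Prime) (r : ℕ) {x y : C} {a : ℝ}
    (hx : ‖x‖ ≤ 1) (hy : ‖y‖ ≤ 1) (hpa : ‖(p : C)‖ ≤ a) :
    ‖x ^ p ^ r - y ^ p ^ r‖ ≤ max a (‖x - y‖ ^ (p ^ r - 1)) * ‖x - y‖ := by
  have hxy : ‖x - y‖ ≤ 1 := by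
    rw [sub_eq_add_neg]
    exact (IsUltrametricDist.norm_add_le_max _ _).trans (max_le hx (by rwa [norm_neg]))
  have h1 := add_pow_prime_pow_eq hp (x - y) y r
  rw [sub_add_cancel] at h1
  set S := ∑ k ∈ Finset.Ioo 0 (p ^ r), (x - y) ^ (k - 1) * y ^ (p ^ r - k - 1) *
    (((p ^ r).choose k / p : ℕ) : C) with hS
  have hS1 : ‖S‖ ≤ 1 := by
    refine IsUltrametricDist.norm_sum_le_of_forall_le_of_nonneg zero_le_one fun k _ => ?_
    rw [norm_mul, norm_mul, norm_pow, norm_pow]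
    exact mul_le_one₀ (mul_le_one₀ (pow_le_one₀ (norm_nonneg _) hxy) (by positivity)
      (pow_le_one₀ (norm_nonneg _) hy)) (norm_nonneg _) (IsUltrametricDist.norm_natCast_le_one C _)
  have h2 : x ^ p ^ r - y ^ p ^ r = p * (x - y) * y * S + (x - y) ^ p ^ r := by rw [h1]; ring
  rw [h2, max_mul_of_nonneg _ _ (norm_nonneg _), pow_sub_one_mul (pow_pos hp.pos r).ne']
  refine (IsUltrametricDist.norm_add_le_max _ _).trans (max_le_max ?_ (norm_pow _ _).le)
  rw [norm_mul, norm_mul, norm_mul, mul_assoc]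
  have ha : 0 ≤ a := (norm_nonneg _).trans hpa
  calc ‖(p : C)‖ * ‖x - y‖ * (‖y‖ * ‖S‖) ≤ a * ‖x - y‖ * 1 := by
        gcongr
        exact mul_le_one₀ hy (norm_nonneg _) hS1
    _ = a * ‖x - y‖ := mul_one _

end UltrametricInverse

section NormBound

/-- The bound for `‖π‖ ^ i * ‖m_i(u)‖ ^ 2` on the circle of radius `γ`; it increases up to
`i = s + 1` and is constant from there on. -/
noncomputable def ghmBound (γ a : ℝ) (q s i : ℕ) : ℝ :=
  γ ^ (2 * ∑ k ∈ Finset.range (min i (s + 1)), q ^ k) / a ^ min i (s + 1)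

variable {γ a : ℝ} {q s : ℕ}

lemma ghmBound_zero : ghmBound γ a q s 0 = 1 := by simp [ghmBound]

lemma ghmBound_nonneg (hγ : 0 ≤ γ) (ha : 0 ≤ a) (i : ℕ) : 0 ≤ ghmBound γ a q s i := by
  unfold ghmBound; positivity

lemma ghmBound_succ_of_le {i : ℕ} (h : i ≤ s) :
    ghmBound γ a q s (i + 1) = ghmBound γ a q s i * (γ ^ (2 * q ^ i) / a) := by
  unfold ghmBound
  rw [min_eq_left (by omega), min_eq_left (by omega), Finset.sum_range_succ, mul_add, pow_add,
    pow_succ, mul_div_mul_comm]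

lemma ghmBound_of_lt {i : ℕ} (h : s < i) : ghmBound γ a q s i = ghmBound γ a q s (s + 1) := by
  unfold ghmBound
  rw [min_eq_right (by omega), min_self]

lemma le_pow_two_mul_of_le (hγ0 : 0 < γ) (hγ1 : γ < 1) (hγ : γ ^ (q ^ s * (q + 1)) = a)
    (hq : 2 ≤ q) {i : ℕ} (h : i ≤ s) : a ≤ γ ^ (2 * q ^ i) := by
  rw [← hγ]
  refine pow_le_pow_of_le_one hγ0.le hγ1.le ?_
  have := Nat.pow_le_pow_right (by omega : 0 < q) h
  have := Nat.mul_le_mul_left (q ^ s) (by omega : 2 ≤ q + 1)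
  linarith

lemma pow_two_mul_le_of_lt (hγ0 : 0 < γ) (hγ1 : γ < 1) (hγ : γ ^ (q ^ s * (q + 1)) = a)
    (hq : 2 ≤ q) {i : ℕ} (h : s < i) : γ ^ (2 * q ^ i) ≤ a := by
  rw [← hγ]
  refine pow_le_pow_of_le_one hγ0.le hγ1.le ?_
  have h1 := Nat.pow_le_pow_right (by omega : 0 < q) (Nat.succ_le_of_lt h)
  have h2 : q ^ (s + 1) = q ^ s * q := pow_succ _ _
  have h3 : q ^ s ≤ q ^ s * q := Nat.le_mul_of_pos_right _ (by omega)
  simp only [Nat.succ_eq_add_one] at h1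
  nlinarith

lemma ghmBound_monotone (hγ0 : 0 < γ) (hγ1 : γ < 1) (hγ : γ ^ (q ^ s * (q + 1)) = a)
    (hq : 2 ≤ q) : Monotone (ghmBound γ a q s) := by
  have ha : 0 < a := hγ ▸ pow_pos hγ0 _
  refine monotone_nat_of_le_succ fun i => ?_
  rcases le_or_gt i s with h | h
  · rw [ghmBound_succ_of_le h]
    refine le_mul_of_one_le_right (ghmBound_nonneg hγ0.le ha.le i) ?_
    rw [one_le_div ha]
    exact le_pow_two_mul_of_le hγ0 hγ1 hγ hq h
  · rw [ghmBound_of_lt h, ghmBound_of_lt (by omega : s < i + 1)]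

lemma ghmBound_mul_le (hγ0 : 0 < γ) (hγ1 : γ < 1) (hγ : γ ^ (q ^ s * (q + 1)) = a)
    (hq : 2 ≤ q) (i : ℕ) :
    ghmBound γ a q s i * (γ ^ (2 * q ^ i) / a) ≤ ghmBound γ a q s (i + 1) := by
  have ha : 0 < a := hγ ▸ pow_pos hγ0 _
  rcases le_or_gt i s with h | h
  · rw [ghmBound_succ_of_le h]
  · rw [ghmBound_of_lt h, ghmBound_of_lt (by omega : s < i + 1)]
    refine mul_le_of_le_one_right (ghmBound_nonneg hγ0.le ha.le _) ?_
    rw [div_le_one ha]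
    exact pow_two_mul_le_of_lt hγ0 hγ1 hγ hq h

lemma pow_pow_le_geometric (hγ0 : 0 < γ) (hγ1 : γ < 1) (hq : 2 ≤ q) {k n : ℕ} (h : k ≤ n) :
    γ ^ q ^ n ≤ γ ^ k :=
  pow_le_pow_of_le_one hγ0.le hγ1.le (h.trans (Nat.lt_pow_self (by omega)).le)

end NormBound

/-- The recursion of `m_k` expanding from the innermost variable. -/
lemma ghm_add_two {C : Type*} [Field C] (π : C) (q k : ℕ) (u : C) :
    ghm π q (k + 2) u = (ghm π q (k + 1) u * u ^ q ^ (k + 1) + ghm π q k u) / π := by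
  induction k using Nat.twoStepInduction generalizing u with
  | zero => simp only [ghm]; ring
  | one => simp only [ghm]; ring
  | more k ih1 ih2 =>
    have e1 : ghm π q (k + 2 + 2) u = (u / π) * ghm π q (k + 1 + 2) (u ^ q) +
      (1 / π) * ghm π q (k + 2) (u ^ q ^ 2) := rfl
    have e2 : ghm π q (k + 2 + 1) u = (u / π) * ghm π q (k + 2) (u ^ q) +
      (1 / π) * ghm π q (k + 1) (u ^ q ^ 2) := rfl
    have e3 : ghm π q (k + 2) u = (u / π) * ghm π q (k + 1) (u ^ q) +
      (1 / π) * ghm π q k (u ^ q ^ 2) := rfl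
    rw [e1, ih2, e2, e3]
    simp only [← pow_mul, ← pow_succ']
    rw [ih1 (u ^ q), ih1 (u ^ q ^ 2)]
    simp only [← pow_mul, ← pow_succ', ← pow_add]
    ring

lemma ghm_even_succ_sub {C : Type*} [Field C] {π : C} (hπ : π ≠ 0) (q : ℕ) (u : C) (k : ℕ) :
    π ^ (k + 1) * ghm π q (2 * (k + 1)) u - π ^ k * ghm π q (2 * k) u =
      π ^ k * ghm π q (2 * k + 1) u * u ^ q ^ (2 * k + 1) := by
  rw [show 2 * (k + 1) = 2 * k + 2 by ring, ghm_add_two]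
  field_simp
  ring

lemma ghm_odd_succ_sub {C : Type*} [Field C] {π : C} (hπ : π ≠ 0) (q : ℕ) (u : C) (k : ℕ) :
    π ^ (k + 1 + 1) * ghm π q (2 * (k + 1) + 1) u - π ^ (k + 1) * ghm π q (2 * k + 1) u =
      π ^ (k + 1) * ghm π q (2 * (k + 1)) u * u ^ q ^ (2 * (k + 1)) := by
  rw [show 2 * (k + 1) + 1 = (2 * k + 1) + 2 by ring, ghm_add_two,
    show 2 * k + 1 + 1 = 2 * (k + 1) by ring]
  field_simp
  ring

section OnCircle

variable {C : Type*} [NormedField C] [IsUltrametricDist C] {π : C} {q s : ℕ} {γ : ℝ}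

lemma norm_ghm_sq_le (hγ0 : 0 < γ) (hγ1 : γ < 1) (hγ : γ ^ (q ^ s * (q + 1)) = ‖π‖) (hq : 2 ≤ q)
    {u : C} (hu : ‖u‖ = γ) (i : ℕ) :
    ‖π‖ ^ i * ‖ghm π q i u‖ ^ 2 ≤ ghmBound γ ‖π‖ q s i := by
  have hπ : 0 < ‖π‖ := hγ ▸ pow_pos hγ0 _
  induction i using Nat.twoStepInduction with
  | zero => simp [ghm, ghmBound_zero]
  | one =>
    refine le_trans (le_of_eq ?_) (ghmBound_mul_le hγ0 hγ1 hγ hq 0)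
    simp only [ghm, ghmBound_zero, norm_div, hu]
    field_simp
    ring
  | more i ih1 ih2 =>
    have h1 : ‖ghm π q (i + 2) u‖ ^ 2 ≤
        max ((‖ghm π q (i + 1) u‖ * γ ^ q ^ (i + 1) / ‖π‖) ^ 2) ((‖ghm π q i u‖ / ‖π‖) ^ 2) := by
      rw [ghm_add_two, add_div]
      have h2 := IsUltrametricDist.norm_add_le_max (ghm π q (i + 1) u * u ^ q ^ (i + 1) / π)
        (ghm π q i u / π)
      rw [norm_div, norm_div, norm_mul, norm_pow, hu] at h2
      rcases le_max_iff.1 h2 with h2 | h2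
      · exact le_max_of_le_left (pow_le_pow_left₀ (norm_nonneg _) h2 2)
      · exact le_max_of_le_right (pow_le_pow_left₀ (norm_nonneg _) h2 2)
    refine (mul_le_mul_of_nonneg_left h1 (by positivity)).trans ?_
    rw [mul_max_of_nonneg _ _ (by positivity)]
    refine max_le ?_ ?_
    · refine le_trans ?_ (ghmBound_mul_le hγ0 hγ1 hγ hq (i + 1))
      refine le_trans (le_of_eq ?_) (mul_le_mul_of_nonneg_right ih2 (by positivity))
      field_simp
      ring
    · refine le_trans (le_of_eq ?_) (ih1.trans (ghmBound_monotone hγ0 hγ1 hγ hq (by omega)))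
      field_simp
      ring

/-- Up to `i = s + 1` the polynomial `m_i` is dominated by its leading monomial. -/
lemma norm_ghm_sub_leading_le (hγ0 : 0 < γ) (hγ1 : γ < 1) (hγ : γ ^ (q ^ s * (q + 1)) = ‖π‖)
    (hq : 2 ≤ q) {u : C} (hu : ‖u‖ = γ) {i : ℕ} (hi : i ≤ s + 1) :
    ‖ghm π q i u - u ^ (∑ k ∈ Finset.range i, q ^ k) / π ^ i‖ ≤
      γ ^ q ^ s * (γ ^ (∑ k ∈ Finset.range i, q ^ k) / ‖π‖ ^ i) := by
  have hπ : 0 < ‖π‖ := hγ ▸ pow_pos hγ0 _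
  have hπ0 : π ≠ 0 := norm_pos_iff.1 hπ
  induction i using Nat.twoStepInduction with
  | zero => simp only [ghm]; simp; positivity
  | one => simp only [ghm]; simp; positivity
  | more i ih1 ih2 =>
    have h1 : ‖ghm π q i u‖ ≤ γ ^ (∑ k ∈ Finset.range i, q ^ k) / ‖π‖ ^ i := by
      have h2 : ghm π q i u = (ghm π q i u - u ^ (∑ k ∈ Finset.range i, q ^ k) / π ^ i) +
        u ^ (∑ k ∈ Finset.range i, q ^ k) / π ^ i := by ring
      rw [h2]
      refine (IsUltrametricDist.norm_add_le_max _ _).trans (max_le ((ih1 (by omega)).trans ?_) ?_)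
      · exact mul_le_of_le_one_left (by positivity) (pow_le_one₀ hγ0.le hγ1.le)
      · rw [norm_div, norm_pow, norm_pow, hu]
    have h3 : ghm π q (i + 2) u - u ^ (∑ k ∈ Finset.range (i + 2), q ^ k) / π ^ (i + 2) =
        (ghm π q (i + 1) u - u ^ (∑ k ∈ Finset.range (i + 1), q ^ k) / π ^ (i + 1)) *
          u ^ q ^ (i + 1) / π + ghm π q i u / π := by
      rw [ghm_add_two, Finset.sum_range_succ _ (i + 1), pow_add u]
      field_simp
      ring
    rw [h3]
    refine (IsUltrametricDist.norm_add_le_max _ _).trans (max_le ?_ ?_)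
    · rw [norm_div, norm_mul, norm_pow, hu, Finset.sum_range_succ _ (i + 1), pow_add γ]
      refine (div_le_div_of_nonneg_right (mul_le_mul_of_nonneg_right (ih2 (by omega))
        (by positivity)) hπ.le).trans (le_of_eq ?_)
      field_simp
      ring
    · rw [norm_div, Finset.sum_range_succ _ (i + 1), Finset.sum_range_succ _ i, pow_add γ,
        pow_add γ]
      refine (div_le_div_of_nonneg_right h1 hπ.le).trans ?_
      have h4 : ‖π‖ ≤ γ ^ q ^ s * (γ ^ q ^ i * γ ^ q ^ (i + 1)) := by
        rw [← hγ, ← pow_add, ← pow_add]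
        refine pow_le_pow_of_le_one hγ0.le hγ1.le ?_
        have h5 := Nat.pow_le_pow_right (by omega : 0 < q) (by omega : i ≤ s)
        have h6 := Nat.pow_le_pow_right (by omega : 0 < q) (by omega : i + 1 ≤ s)
        have h7 := Nat.mul_le_mul_left (q ^ s) (by omega : 3 ≤ q + 1)
        linarith
      rw [div_div, ← pow_succ, pow_succ _ (i + 1), ← div_div, mul_assoc]
      have h7 : γ ^ q ^ s * (γ ^ (∑ k ∈ Finset.range i, q ^ k) * (γ ^ q ^ i * γ ^ q ^ (i + 1)) /
          ‖π‖ ^ (i + 1) / ‖π‖) = γ ^ (∑ k ∈ Finset.range i, q ^ k) / ‖π‖ ^ (i + 1) *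
          ((γ ^ q ^ s * (γ ^ q ^ i * γ ^ q ^ (i + 1))) / ‖π‖) := by ring
      rw [h7]
      exact le_mul_of_one_le_right (by positivity) ((one_le_div hπ).2 h4)

lemma norm_sub_pow_succ_le {p r : ℕ} (hp : p.Prime) (hqr : q = p ^ r) {κ ρ : ℝ} {u v : C}
    (hu : ‖u‖ ≤ 1) (hv : ‖v‖ ≤ 1) (huv : ‖u - v‖ ≤ ρ) (hκ1 : κ ≤ 1)
    (hpκ : ‖(p : C)‖ ≤ κ) (hρκ : ρ ^ (q - 1) ≤ κ) (i : ℕ) :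
    ‖u ^ q ^ (i + 1) - v ^ q ^ (i + 1)‖ ≤ κ * ‖u ^ q ^ i - v ^ q ^ i‖ := by
  have key : ∀ j, ‖u ^ q ^ j - v ^ q ^ j‖ ≤ ρ →
      ‖u ^ q ^ (j + 1) - v ^ q ^ (j + 1)‖ ≤ κ * ‖u ^ q ^ j - v ^ q ^ j‖ := by
    intro j hj
    have h1 := norm_pow_prime_pow_sub_le hp r (x := u ^ q ^ j) (y := v ^ q ^ j)
      (by rw [norm_pow]; exact pow_le_one₀ (norm_nonneg _) hu)
      (by rw [norm_pow]; exact pow_le_one₀ (norm_nonneg _) hv) hpκ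
    rw [← hqr, ← pow_mul, ← pow_mul, ← pow_succ] at h1
    refine h1.trans (mul_le_mul_of_nonneg_right (max_le le_rfl ?_) (norm_nonneg _))
    exact (pow_le_pow_left₀ (norm_nonneg _) hj _).trans hρκ
  refine key i ?_
  induction i with
  | zero => simpa using huv
  | succ i ih => exact (key i ih).trans ((mul_le_of_le_one_left (norm_nonneg _) hκ1).trans ih)

lemma ghmBound_mul_norm_sub_le (hγ0 : 0 < γ) (hγ1 : γ < 1) {p r : ℕ} (hp : p.Prime)
    (hqr : q = p ^ r) (hq : 2 ≤ q) {κ ρ θ : ℝ} {u v : C} (hu : ‖u‖ = γ) (hv : ‖v‖ = γ)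
    (huv : ‖u - v‖ ≤ ρ) (hκ1 : κ ≤ 1) (hpκ : ‖(p : C)‖ ≤ κ) (hρκ : ρ ^ (q - 1) ≤ κ)
    (hπ : 0 < ‖π‖) (hθ : γ ^ 2 * κ = θ * ‖π‖) (hθ1 : θ ≤ 1) (i : ℕ) :
    ghmBound γ ‖π‖ q s (i + 1) * ‖u ^ q ^ (i + 1) - v ^ q ^ (i + 1)‖ ≤ θ * ‖u - v‖ := by
  have hκ0 : 0 ≤ κ := (norm_nonneg _).trans hpκ
  have hstep := norm_sub_pow_succ_le hp hqr (hu.trans_le hγ1.le) (hv.trans_le hγ1.le) huv hκ1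
    hpκ hρκ
  have hB := ghmBound_nonneg (q := q) (s := s) hγ0.le hπ.le
  induction i with
  | zero =>
    rw [ghmBound_succ_of_le (Nat.zero_le _), ghmBound_zero]
    refine (mul_le_mul_of_nonneg_left (hstep 0) (by positivity)).trans (le_of_eq ?_)
    simp only [pow_zero, pow_one, mul_one, one_mul]
    rw [← mul_assoc, div_mul_eq_mul_div, hθ, mul_div_cancel_right₀ _ hπ.ne']
  | succ i ih =>
    refine le_trans ?_ ih
    refine (mul_le_mul_of_nonneg_left (hstep (i + 1)) (hB _)).trans ?_
    rw [← mul_assoc]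
    refine mul_le_mul_of_nonneg_right ?_ (norm_nonneg _)
    rcases le_or_gt (i + 1) s with h | h
    · rw [ghmBound_succ_of_le h, mul_assoc]
      refine mul_le_of_le_one_right (hB _) ?_
      rw [div_mul_eq_mul_div, div_le_one hπ]
      have h1 : γ ^ (2 * q ^ (i + 1)) ≤ γ ^ 2 :=
        pow_le_pow_of_le_one hγ0.le hγ1.le (Nat.le_mul_of_pos_right _ (pow_pos (by omega) _))
      nlinarith
    · rw [ghmBound_of_lt h, ghmBound_of_lt (by omega : s < i + 1 + 1)]
      exact mul_le_of_le_one_right (hB _) hκ1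

/-- The cross determinants of consecutive `m_k` at two points are close to `±(u - v)`. -/
lemma norm_ghm_cross_sub_le (hγ0 : 0 < γ) (hγ1 : γ < 1) (hγ : γ ^ (q ^ s * (q + 1)) = ‖π‖)
    (hq : 2 ≤ q) {θ : ℝ} {u v : C} (hu : ‖u‖ = γ) (hv : ‖v‖ = γ) (hθ0 : 0 ≤ θ)
    (hθ : ∀ i, ghmBound γ ‖π‖ q s (i + 1) * ‖u ^ q ^ (i + 1) - v ^ q ^ (i + 1)‖ ≤ θ * ‖u - v‖)
    (k : ℕ) :
    ‖π ^ (k + 1) * (ghm π q (k + 1) u * ghm π q k v - ghm π q k u * ghm π q (k + 1) v) -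
      (-1) ^ k * (u - v)‖ ≤ θ * ‖u - v‖ := by
  have hπ : 0 < ‖π‖ := hγ ▸ pow_pos hγ0 _
  have hπ0 : π ≠ 0 := norm_pos_iff.1 hπ
  induction k with
  | zero =>
    have h1 : π ^ (0 + 1) * (ghm π q (0 + 1) u * ghm π q 0 v - ghm π q 0 u * ghm π q (0 + 1) v) -
      (-1) ^ 0 * (u - v) = 0 := by simp only [ghm]; field_simp; ring
    rw [h1, norm_zero]
    positivity
  | succ k ih =>
    have h1 : π ^ (k + 1 + 1) * (ghm π q (k + 1 + 1) u * ghm π q (k + 1) v -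
        ghm π q (k + 1) u * ghm π q (k + 1 + 1) v) - (-1) ^ (k + 1) * (u - v) =
        π ^ (k + 1) * (ghm π q (k + 1) u * ghm π q (k + 1) v) *
          (u ^ q ^ (k + 1) - v ^ q ^ (k + 1)) +
        -(π ^ (k + 1) * (ghm π q (k + 1) u * ghm π q k v - ghm π q k u * ghm π q (k + 1) v) -
      (-1) ^ k * (u - v)) := by
      rw [ghm_add_two, ghm_add_two]
      field_simp
      ring
    rw [h1]
    refine (IsUltrametricDist.norm_add_le_max _ _).trans (max_le ?_ (by rwa [norm_neg]))
    refine le_trans ?_ (hθ k)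
    rw [norm_mul, norm_mul, norm_mul, norm_pow]
    refine mul_le_mul_of_nonneg_right ?_ (norm_nonneg _)
    have h2 := norm_ghm_sq_le hγ0 hγ1 hγ hq hu (k + 1)
    have h3 := norm_ghm_sq_le hγ0 hγ1 hγ hq hv (k + 1)
    have h4 : 0 < ‖π‖ ^ (k + 1) := by positivity
    nlinarith [mul_nonneg h4.le (sq_nonneg (‖ghm π q (k + 1) u‖ - ‖ghm π q (k + 1) v‖))]

lemma norm_pi_pow_mul_ghm_even_le (hγ0 : 0 < γ) (hγ1 : γ < 1)
    (hγ : γ ^ (q ^ s * (q + 1)) = ‖π‖) (hq : 2 ≤ q) {u : C} (hu : ‖u‖ = γ) (k : ℕ) :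
    ‖π ^ k * ghm π q (2 * k) u‖ ^ 2 ≤ ghmBound γ ‖π‖ q s (s + 1) := by
  have h1 : ‖π ^ k * ghm π q (2 * k) u‖ ^ 2 = ‖π‖ ^ (2 * k) * ‖ghm π q (2 * k) u‖ ^ 2 := by
    rw [norm_mul, norm_pow]; ring
  rw [h1]
  refine (norm_ghm_sq_le hγ0 hγ1 hγ hq hu _).trans ?_
  refine (ghmBound_monotone hγ0 hγ1 hγ hq (le_max_left (2 * k) (s + 1))).trans (le_of_eq ?_)
  exact ghmBound_of_lt (by omega)

lemma norm_pi_pow_mul_ghm_odd_le (hγ0 : 0 < γ) (hγ1 : γ < 1)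
    (hγ : γ ^ (q ^ s * (q + 1)) = ‖π‖) (hq : 2 ≤ q) {u : C} (hu : ‖u‖ = γ) (k : ℕ) :
    ‖π ^ k * ghm π q (2 * k + 1) u‖ ^ 2 ≤ ghmBound γ ‖π‖ q s (s + 1) / ‖π‖ := by
  have hπ : 0 < ‖π‖ := hγ ▸ pow_pos hγ0 _
  have h1 : ‖π ^ k * ghm π q (2 * k + 1) u‖ ^ 2 =
      ‖π‖ ^ (2 * k + 1) * ‖ghm π q (2 * k + 1) u‖ ^ 2 / ‖π‖ := by
    rw [norm_mul, norm_pow]; field_simp; ring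
  rw [h1]
  refine div_le_div_of_nonneg_right ((norm_ghm_sq_le hγ0 hγ1 hγ hq hu _).trans ?_) hπ.le
  refine (ghmBound_monotone hγ0 hγ1 hγ hq (le_max_left (2 * k + 1) (s + 1))).trans (le_of_eq ?_)
  exact ghmBound_of_lt (by omega)

lemma tendsto_ghphi0 [CompleteSpace C] (hγ0 : 0 < γ) (hγ1 : γ < 1)
    (hγ : γ ^ (q ^ s * (q + 1)) = ‖π‖) (hq : 2 ≤ q) {u : C} (hu : ‖u‖ = γ) :
    Tendsto (fun k => π ^ k * ghm π q (2 * k) u) atTop (nhds (ghphi0 π q u)) := by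
  have hπ : 0 < ‖π‖ := hγ ▸ pow_pos hγ0 _
  refine CauchySeq.tendsto_limUnder (cauchySeq_of_le_geometric γ
    (√(ghmBound γ ‖π‖ q s (s + 1) / ‖π‖)) hγ1 fun k => ?_)
  rw [dist_comm, dist_eq_norm, ghm_even_succ_sub (norm_pos_iff.1 hπ) q, norm_mul, norm_pow, hu]
  exact mul_le_mul (Real.le_sqrt_of_sq_le (norm_pi_pow_mul_ghm_odd_le hγ0 hγ1 hγ hq hu k))
    (pow_pow_le_geometric hγ0 hγ1 hq (by omega)) (by positivity) (by positivity)

lemma tendsto_ghphi1 [CompleteSpace C] (hγ0 : 0 < γ) (hγ1 : γ < 1)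
    (hγ : γ ^ (q ^ s * (q + 1)) = ‖π‖) (hq : 2 ≤ q) {u : C} (hu : ‖u‖ = γ) :
    Tendsto (fun k => π ^ (k + 1) * ghm π q (2 * k + 1) u) atTop (nhds (ghphi1 π q u)) := by
  have hπ : 0 < ‖π‖ := hγ ▸ pow_pos hγ0 _
  refine CauchySeq.tendsto_limUnder (cauchySeq_of_le_geometric γ
    (√(ghmBound γ ‖π‖ q s (s + 1))) hγ1 fun k => ?_)
  rw [dist_comm, dist_eq_norm, ghm_odd_succ_sub (norm_pos_iff.1 hπ) q, norm_mul, norm_pow, hu]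
  exact mul_le_mul
    (Real.le_sqrt_of_sq_le (norm_pi_pow_mul_ghm_even_le hγ0 hγ1 hγ hq hu (k + 1)))
    (pow_pow_le_geometric hγ0 hγ1 hq (by omega)) (by positivity) (by positivity)

lemma norm_ghphi_cross_sub_le [CompleteSpace C] (hγ0 : 0 < γ) (hγ1 : γ < 1)
    (hγ : γ ^ (q ^ s * (q + 1)) = ‖π‖) (hq : 2 ≤ q) {θ : ℝ} {u v : C} (hu : ‖u‖ = γ)
    (hv : ‖v‖ = γ) (hθ0 : 0 ≤ θ)
    (hθ : ∀ i, ghmBound γ ‖π‖ q s (i + 1) * ‖u ^ q ^ (i + 1) - v ^ q ^ (i + 1)‖ ≤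
      θ * ‖u - v‖) :
    ‖ghphi1 π q u * ghphi0 π q v - ghphi0 π q u * ghphi1 π q v - (u - v)‖ ≤ θ * ‖u - v‖ := by
  have hlim := ((((tendsto_ghphi1 hγ0 hγ1 hγ hq hu).mul (tendsto_ghphi0 hγ0 hγ1 hγ hq hv)).sub
    ((tendsto_ghphi0 hγ0 hγ1 hγ hq hu).mul (tendsto_ghphi1 hγ0 hγ1 hγ hq hv))).sub
    (tendsto_const_nhds (x := u - v))).norm
  refine le_of_tendsto' hlim fun k => ?_
  refine le_trans (le_of_eq ?_) (norm_ghm_cross_sub_le hγ0 hγ1 hγ hq hu hv hθ0 hθ (2 * k))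
  congr 1
  rw [pow_mul (-1 : C)]
  ring

/-- On the circle of radius `γ` the function `φ₁` is dominated by a single monomial. -/
lemma norm_ghphi1_sub_leading_le [CompleteSpace C] (hγ0 : 0 < γ) (hγ1 : γ < 1)
    (hγ : γ ^ (q ^ s * (q + 1)) = ‖π‖) (hq : 2 ≤ q) {j : ℕ} (hj : s = 2 * j) {u : C}
    (hu : ‖u‖ = γ) :
    ‖ghphi1 π q u - u ^ (∑ k ∈ Finset.range (s + 1), q ^ k) / π ^ j‖ ≤
      γ ^ q ^ s * (γ ^ (∑ k ∈ Finset.range (s + 1), q ^ k) / ‖π‖ ^ j) := by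
  have hπ : 0 < ‖π‖ := hγ ▸ pow_pos hγ0 _
  have hπ0 : π ≠ 0 := norm_pos_iff.1 hπ
  set N := ∑ k ∈ Finset.range (s + 1), q ^ k with hN
  have hbound : ∀ k, j ≤ k → ‖π ^ (k + 1) * ghm π q (2 * k + 1) u - u ^ N / π ^ j‖ ≤
      γ ^ q ^ s * (γ ^ N / ‖π‖ ^ j) := by
    intro k hk
    induction k, hk using Nat.le_induction with
    | base =>
      have h1 := norm_ghm_sub_leading_le hγ0 hγ1 hγ hq hu (le_refl (s + 1))
      rw [← hN] at h1
      have h2 : π ^ (j + 1) * ghm π q (2 * j + 1) u - u ^ N / π ^ j =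
          π ^ (j + 1) * (ghm π q (s + 1) u - u ^ N / π ^ (s + 1)) := by
        rw [hj]; field_simp; ring
      rw [h2, norm_mul, norm_pow]
      refine (mul_le_mul_of_nonneg_left h1 (by positivity)).trans (le_of_eq ?_)
      rw [hj]; field_simp; ring
    | succ k hk ih =>
      have h1 : π ^ (k + 1 + 1) * ghm π q (2 * (k + 1) + 1) u - u ^ N / π ^ j =
          π ^ (k + 1) * ghm π q (2 * (k + 1)) u * u ^ q ^ (2 * (k + 1)) +
          (π ^ (k + 1) * ghm π q (2 * k + 1) u - u ^ N / π ^ j) := by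
        rw [← ghm_odd_succ_sub hπ0 q]; ring
      rw [h1]
      refine (IsUltrametricDist.norm_add_le_max _ _).trans (max_le ?_ ih)
      refine le_of_sq_le_sq ?_ (by positivity)
      rw [norm_mul, mul_pow, norm_pow, hu]
      have h2 := norm_pi_pow_mul_ghm_even_le hγ0 hγ1 hγ hq hu (k + 1)
      refine (mul_le_mul_of_nonneg_right h2 (by positivity)).trans ?_
      have h3 : (γ ^ q ^ (2 * (k + 1))) ^ 2 ≤ (γ ^ q ^ s) ^ 2 * ‖π‖ := by
        rw [← hγ, ← pow_mul, ← pow_mul, ← pow_add]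
        refine pow_le_pow_of_le_one hγ0.le hγ1.le ?_
        have h4 := Nat.pow_le_pow_right (by omega : 0 < q) (by omega : s + 2 ≤ 2 * (k + 1))
        have h5 : q ^ (s + 2) = q ^ s * q ^ 2 := pow_add _ _ _
        have h6 : 0 < q ^ s := pow_pos (by omega) _
        have h7 : q + 3 ≤ 2 * q ^ 2 := by nlinarith
        nlinarith
      have h8 : ghmBound γ ‖π‖ q s (s + 1) = (γ ^ N / ‖π‖ ^ j) ^ 2 / ‖π‖ := by
        unfold ghmBound
        rw [min_self, ← hN, hj]
        field_simp
        ring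
      refine (mul_le_mul_of_nonneg_left h3 (ghmBound_nonneg hγ0.le hπ.le _)).trans (le_of_eq ?_)
      rw [h8]
      field_simp
  exact le_of_tendsto ((tendsto_ghphi1 hγ0 hγ1 hγ hq hu).sub tendsto_const_nhds).norm
    (eventually_atTop.2 ⟨j, hbound⟩)

lemma norm_ghphi1_eq [CompleteSpace C] (hγ0 : 0 < γ) (hγ1 : γ < 1)
    (hγ : γ ^ (q ^ s * (q + 1)) = ‖π‖) (hq : 2 ≤ q) {j : ℕ} (hj : s = 2 * j) {u : C}
    (hu : ‖u‖ = γ) :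
    ‖ghphi1 π q u‖ = γ ^ (∑ k ∈ Finset.range (s + 1), q ^ k) / ‖π‖ ^ j := by
  have hπ : 0 < ‖π‖ := hγ ▸ pow_pos hγ0 _
  have h1 := norm_ghphi1_sub_leading_le hγ0 hγ1 hγ hq hj hu
  set N := ∑ k ∈ Finset.range (s + 1), q ^ k with hN
  have h2 : ‖u ^ N / π ^ j‖ = γ ^ N / ‖π‖ ^ j := by rw [norm_div, norm_pow, norm_pow, hu]
  have h3 : ‖ghphi1 π q u - u ^ N / π ^ j‖ < ‖u ^ N / π ^ j‖ := by
    rw [h2]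
    refine h1.trans_lt (mul_lt_of_lt_one_left (by positivity) ?_)
    exact pow_lt_one₀ hγ0.le hγ1 (pow_pos (by omega) _).ne'
  have h4 := IsUltrametricDist.norm_add_eq_max_of_norm_ne_norm h3.ne
  rw [sub_add_cancel, max_eq_right h3.le, h2] at h4
  exact h4

lemma norm_pow_sub_pow_le_of_norm_eq {u v : C} (hu : ‖u‖ = γ) (hv : ‖v‖ = γ) (n : ℕ) :
    ‖u ^ (n + 1) - v ^ (n + 1)‖ ≤ γ ^ n * ‖u - v‖ := by
  have hγ : 0 ≤ γ := hu ▸ norm_nonneg u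
  rw [← geom_sum₂_mul, norm_mul]
  refine mul_le_mul_of_nonneg_right ?_ (norm_nonneg _)
  refine IsUltrametricDist.norm_sum_le_of_forall_le_of_nonneg (by positivity) fun i hi => ?_
  rw [norm_mul, norm_pow, norm_pow, hu, hv, ← pow_add]
  have := Finset.mem_range.1 hi
  exact le_of_eq (congrArg _ (by omega))

lemma norm_ghphi1_sub_le [CompleteSpace C] (hγ0 : 0 < γ) (hγ1 : γ < 1)
    (hγ : γ ^ (q ^ s * (q + 1)) = ‖π‖) (hq : 2 ≤ q) {j : ℕ} (hj : s = 2 * j) {u v : C}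
    (hu : ‖u‖ = γ) (hv : ‖v‖ = γ) {ρ : ℝ} (huv : ‖u - v‖ ≤ ρ) :
    ‖ghphi1 π q u - ghphi1 π q v‖ ≤
      max (γ ^ q ^ s) (ρ / γ) * (γ ^ (∑ k ∈ Finset.range (s + 1), q ^ k) / ‖π‖ ^ j) := by
  have hπ : 0 < ‖π‖ := hγ ▸ pow_pos hγ0 _
  have h1 := norm_ghphi1_sub_leading_le hγ0 hγ1 hγ hq hj hu
  have h2 := norm_ghphi1_sub_leading_le hγ0 hγ1 hγ hq hj hv
  obtain ⟨n, hn⟩ : ∃ n, ∑ k ∈ Finset.range (s + 1), q ^ k = n + 1 :=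
    ⟨_, Finset.sum_range_succ' _ s⟩
  rw [hn] at h1 h2 ⊢
  have h3 : ghphi1 π q u - ghphi1 π q v = (ghphi1 π q u - u ^ (n + 1) / π ^ j) +
      ((u ^ (n + 1) - v ^ (n + 1)) / π ^ j + -(ghphi1 π q v - v ^ (n + 1) / π ^ j)) := by ring
  have h4 : γ ^ q ^ s * (γ ^ (n + 1) / ‖π‖ ^ j) ≤
      max (γ ^ q ^ s) (ρ / γ) * (γ ^ (n + 1) / ‖π‖ ^ j) :=
    mul_le_mul_of_nonneg_right (le_max_left _ _) (by positivity)
  rw [h3]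
  refine (IsUltrametricDist.norm_add_le_max _ _).trans (max_le (h1.trans h4)
    ((IsUltrametricDist.norm_add_le_max _ _).trans (max_le ?_ ?_)))
  · refine le_trans ?_ (mul_le_mul_of_nonneg_right (le_max_right _ _) (by positivity))
    rw [norm_div, norm_pow]
    refine (div_le_div_of_nonneg_right ((norm_pow_sub_pow_le_of_norm_eq hu hv n).trans
      (mul_le_mul_of_nonneg_left huv (by positivity))) (by positivity)).trans (le_of_eq ?_)
    field_simp
    ring
  · rw [norm_neg]
    exact h2.trans h4

end OnCircle

theorem period_map_image_bijection_even {p : ℕ} [Fact p.Prime] {C : Type*} [NormedField C] [IsUltrametricDist C]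
    [CompleteSpace C] [IsAlgClosed C] [Algebra ℚ_[p] C]
    (hiso : ∀ x : ℚ_[p], ‖algebraMap ℚ_[p] C x‖ = ‖x‖)
    (K : IntermediateField ℚ_[p] C) (hKfin : FiniteDimensional ℚ_[p] K)
    (q : ℕ) (hq : ∃ r : ℕ, 0 < r ∧ q = p ^ r)
    (π : C) (hπK : π ∈ K) (hπ0 : 0 < ‖π‖) (hπ1 : ‖π‖ < 1)
    (hπunif : ∀ x ∈ K, ‖x‖ < 1 → ‖x‖ ≤ ‖π‖)
    (hres : ∃ S : Finset C, S.card = q ∧ (∀ s ∈ S, s ∈ K ∧ ‖s‖ ≤ 1) ∧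
      (∀ x ∈ K, ‖x‖ ≤ 1 → ∃ s ∈ S, ‖x - s‖ < 1) ∧
      (∀ s ∈ S, ∀ t ∈ S, s ≠ t → ‖s - t‖ = 1))
    (s : ℕ) (hs : Even s)
    (γ : ℝ) (hγ : γ = ‖π‖ ^ ((1:ℝ)/((q:ℝ)^(s+1) + (q:ℝ)^s)))
    (u0 : C) (hu0 : ‖u0‖ = γ) :
    (∀ u : C, ‖u - u0‖ < (‖π‖ * γ ^ (-(2:ℝ))) ^ ((1:ℝ)/((q:ℝ)-1)) → ghphi1 π q u ≠ 0) ∧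
    Set.BijOn (fun u => ghphi0 π q u / ghphi1 π q u)
      {u : C | ‖u - u0‖ < (‖π‖ * γ ^ (-(2:ℝ))) ^ ((1:ℝ)/((q:ℝ)-1))}
      {z : C | ‖z - ghphi0 π q u0 / ghphi1 π q u0‖ < ‖π‖ ^ ((s:ℝ) - 1/((q:ℝ)+1))} := by
  obtain ⟨r, hr, hqr⟩ := hq
  obtain ⟨j, hj⟩ := hs
  rw [← two_mul] at hj
  have hp : p.Prime := Fact.out
  have hq2 : 2 ≤ q := hqr ▸ hp.two_le.trans (Nat.le_self_pow hr.ne' p)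
  have hpπ : ‖(p : C)‖ ≤ ‖π‖ := by
    refine hπunif _ (natCast_mem K p) ?_
    rw [← map_natCast (algebraMap ℚ_[p] C), hiso]
    exact Padic.norm_p_lt_one
  have hq0 : (0 : ℝ) < q := by positivity
  have hγ0 : 0 < γ := hγ ▸ Real.rpow_pos_of_pos hπ0 _
  have hγ1 : γ < 1 := hγ ▸ Real.rpow_lt_one hπ0.le hπ1 (by positivity)
  have hγπ : γ ^ (q ^ s * (q + 1)) = ‖π‖ := by
    rw [hγ, ← Real.rpow_mul_natCast hπ0.le]
    have h1 : (1 : ℝ) / ((q : ℝ) ^ (s + 1) + (q : ℝ) ^ s) * ((q ^ s * (q + 1) : ℕ) : ℝ) = 1 := by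
      push_cast
      field_simp
      ring
    rw [h1, Real.rpow_one]
  set G := ∑ k ∈ Finset.range s, q ^ k with hG
  have hGq : G * (q - 1) + 1 = q ^ s := by
    have h1 := Nat.geomSum_eq hq2 s
    have h2 := Nat.sub_one_dvd_pow_sub_one q s
    rw [hG, h1, Nat.div_mul_cancel h2]
    exact Nat.sub_add_cancel (Nat.one_le_pow _ _ (by omega))
  obtain ⟨R, hR⟩ : ∃ R, R = γ ^ (q ^ s + 2 * G) := ⟨_, rfl⟩
  have hR0 : 0 < R := hR ▸ pow_pos hγ0 _
  have hRγ : R ≤ γ := by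
    rw [hR]
    exact pow_le_of_le_one hγ0.le hγ1.le (by have := pow_pos (by omega : 0 < q) s; omega)
  have hRπ : R ^ (q - 1) * γ ^ 2 = ‖π‖ := by
    rw [hR, ← pow_mul, ← pow_add, ← hγπ]
    congr 1
    obtain ⟨m, rfl⟩ : ∃ m, q = m + 1 := ⟨q - 1, by omega⟩
    simp only [Nat.add_sub_cancel] at hGq ⊢
    rw [← hGq]
    ring
  have hradius : (‖π‖ * γ ^ (-(2 : ℝ))) ^ ((1 : ℝ) / ((q : ℝ) - 1)) = R := by
    have h1 : ‖π‖ * γ ^ (-(2 : ℝ)) = R ^ (q - 1) := by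
      rw [Real.rpow_neg hγ0.le, Real.rpow_ofNat, ← hRπ]
      field_simp
    have h2 : ((q : ℝ) - 1) = ((q - 1 : ℕ) : ℝ) := by
      rw [Nat.cast_sub (by omega), Nat.cast_one]
    rw [h1, h2, one_div, Real.pow_rpow_inv_natCast hR0.le (by omega)]
  have hB0 : 0 < γ ^ (∑ k ∈ Finset.range (s + 1), q ^ k) / ‖π‖ ^ j := by positivity
  obtain ⟨B, hB⟩ : ∃ B, B = γ ^ (∑ k ∈ Finset.range (s + 1), q ^ k) / ‖π‖ ^ j := ⟨_, rfl⟩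
  rw [← hB] at hB0
  have hφ1 : ∀ u : C, ‖u‖ = γ → ‖ghphi1 π q u‖ = B := fun u hu =>
    (norm_ghphi1_eq hγ0 hγ1 hγπ hq2 hj hu).trans hB.symm
  have hne : ∀ u : C, ‖u‖ = γ → ghphi1 π q u ≠ 0 := fun u hu =>
    norm_pos_iff.1 ((hφ1 u hu).symm ▸ hB0)
  have hcircle : ∀ u : C, ‖u - u0‖ < R → ‖u‖ = γ := by
    intro u hu
    have h1 : ‖u - u0‖ < ‖u0‖ := hu.trans_le (hRγ.trans hu0.ge)
    have h2 := IsUltrametricDist.norm_add_eq_max_of_norm_ne_norm h1.ne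
    rwa [sub_add_cancel, max_eq_right h1.le, hu0] at h2
  have hc : -(ghphi1 π q u0 ^ 2)⁻¹ ≠ 0 := neg_ne_zero.2 (inv_ne_zero (pow_ne_zero 2 (hne u0 hu0)))
  have hcnorm : ‖-(ghphi1 π q u0 ^ 2)⁻¹‖ = (B ^ 2)⁻¹ := by
    rw [norm_neg, norm_inv, norm_pow, hφ1 u0 hu0]
  have htarget : ‖π‖ ^ ((s : ℝ) - 1 / ((q : ℝ) + 1)) = ‖-(ghphi1 π q u0 ^ 2)⁻¹‖ * R := by
    have h1 : ‖π‖ ^ (1 / ((q : ℝ) + 1)) = γ ^ q ^ s := by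
      rw [← hγπ, pow_mul, one_div, ← Nat.cast_succ]
      exact Real.pow_rpow_inv_natCast (by positivity) (by omega)
    rw [hcnorm, Real.rpow_sub hπ0, h1, Real.rpow_natCast, hB, hR, Finset.sum_range_succ, ← hG, hj]
    field_simp
    ring
  rw [hradius, htarget]
  refine ⟨fun u hu => hne u (hcircle u hu), ?_⟩
  refine bijOn_ball_of_approx_linear (fun u => ghphi0 π q u / ghphi1 π q u) _ u0 hc R
    fun ρ hρ0 hρR => ?_
  set κ := max ‖π‖ (ρ ^ (q - 1)) with hκ
  set θ := γ ^ 2 * κ / ‖π‖ with hθ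
  have hρq : ρ ^ (q - 1) < R ^ (q - 1) := pow_lt_pow_left₀ hρR hρ0 (by omega)
  have hκ0 : 0 < κ := lt_max_of_lt_left hπ0
  have hκ1 : κ ≤ 1 := max_le hπ1.le
    (pow_le_one₀ hρ0 (hρR.le.trans (hRγ.trans hγ1.le)))
  have hθ1 : θ < 1 := by
    rw [hθ, div_lt_one hπ0, hκ, mul_max_of_nonneg _ _ (by positivity)]
    refine max_lt (mul_lt_of_lt_one_left hπ0 (pow_lt_one₀ hγ0.le hγ1 two_ne_zero)) ?_
    rw [← hRπ, mul_comm]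
    exact mul_lt_mul_of_pos_right hρq (by positivity)
  have hθ0 : 0 ≤ θ := by positivity
  set θ' := max (γ ^ q ^ s) (ρ / γ) with hθ'
  have hθ'0 : 0 ≤ θ' := le_max_of_le_left (by positivity)
  have hθ'1 : θ' < 1 := max_lt (pow_lt_one₀ hγ0.le hγ1 (pow_pos (by omega) _).ne')
    ((div_lt_one hγ0).2 (hρR.trans_le hRγ))
  refine ⟨max θ θ', le_max_of_le_left hθ0, max_lt hθ1 hθ'1, fun u v hu hv => ?_⟩
  have hu' := hcircle u (hu.trans_lt hρR)
  have hv' := hcircle v (hv.trans_lt hρR)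
  have huv : ‖u - v‖ ≤ ρ := by
    rw [← sub_sub_sub_cancel_right u v u0, sub_eq_add_neg]
    exact (IsUltrametricDist.norm_add_le_max _ _).trans (max_le hu (by rwa [norm_neg]))
  have hcross := norm_ghphi_cross_sub_le hγ0 hγ1 hγπ hq2 hu' hv' hθ0
    (ghmBound_mul_norm_sub_le hγ0 hγ1 hp hqr hq2 hu' hv' huv hκ1
      (hpπ.trans (le_max_left _ _)) (le_max_right _ _) hπ0 (div_mul_cancel₀ _ hπ0.ne').symm hθ1.le)
  have hdu := norm_ghphi1_sub_le hγ0 hγ1 hγπ hq2 hj hu' hu0 hu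
  have hdv := norm_ghphi1_sub_le hγ0 hγ1 hγπ hq2 hj hv' hu0 hv
  rw [← hB] at hdu hdv
  have hu1 := hne u hu'
  have hv1 := hne v hv'
  have h01 := hne u0 hu0
  have hnu := hφ1 u hu'
  have hnv := hφ1 v hv'
  have hn0 := hφ1 u0 hu0
  rw [hcnorm]
  generalize ghphi1 π q u = x at *
  generalize ghphi1 π q v = y at *
  generalize ghphi1 π q u0 = b at *
  generalize ghphi0 π q u = x0 at *
  generalize ghphi0 π q v = y0 at *
  have hid : x0 / x - y0 / y - -(b ^ 2)⁻¹ * (u - v) =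
      (-(x * y0 - x0 * y - (u - v)) + (u - v) * ((x * (y - b) + b * (x - b)) / b ^ 2)) /
        (x * y) := by
    field_simp
    ring
  have hxy : ‖x * (y - b) + b * (x - b)‖ ≤ θ' * B ^ 2 := by
    refine (IsUltrametricDist.norm_add_le_max _ _).trans (max_le ?_ ?_)
    · rw [norm_mul, hnu]
      nlinarith
    · rw [norm_mul, hn0]
      nlinarith
  rw [hid, norm_div, norm_mul x y, hnu, hnv, ← sq, div_eq_mul_inv, mul_comm (B ^ 2)⁻¹, ← mul_assoc]
  refine mul_le_mul_of_nonneg_right ?_ (by positivity)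
  rw [max_mul_of_nonneg _ _ (norm_nonneg _)]
  refine (IsUltrametricDist.norm_add_le_max _ _).trans (max_le_max (by rwa [norm_neg]) ?_)
  rw [norm_mul, norm_div, norm_pow, hn0, mul_comm]
  refine mul_le_mul_of_nonneg_right ?_ (norm_nonneg _)
  rwa [div_le_iff₀ (by positivity)]
end
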